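/- arXiv:2511.20064 — 4 statements merged into one kernel-verified Lean document; each statement's English description precedes it below -/
import Mathlib

section
/- Let m ≥ 1, ν ≥ 1, k ≥ 2 be integers and let p ∈ ℝ with 1 < p < ∞. Let (u_n) be a sequence of k-times continuously differentiable maps ℝ^m → ℝ^ν such that sup_n sup_{x ∈ ℝ^m} ‖u_n(x)‖ < ∞ and lim_{t→∞} sup_n ∫_{ℝ^m} (‖D^k u_n‖ − t)_+^{p} = 0. Then lim_{t→∞} sup_n ∫_{ℝ^m} (‖Du_n‖ − t)_+^{kp} = 0. -/
open MeasureTheory Filter Topology ENNReal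

/-!
A fixed linear combination of the values `f (x + j • h)`, `j < k`, recovers `Df(x) h` up to Taylor
remainders, so `‖Df(x)‖ r ≲ M + r ^ k * a(x)`, where `M` bounds `f` and `a(x)` is a sum of averages
of `‖D^k f‖` over finitely many segments of length comparable to `r` issuing from `x`. Given a
level `l`, choose `r` with `r ^ k = M / l` and split `‖D^k f‖ ≤ l + (‖D^k f‖ - l)₊`: if
`‖Df(x)‖ ^ k` exceeds a large multiple of `M ^ (k - 1) * l`, then the averages of
`(‖D^k f‖ - l)₊` add up to at least `l`. Averaging over translates preserves the integral, so
Markov's inequality bounds the measure of the set of such `x` by a multiple of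
`l⁻¹ * ∫ (‖D^k f‖ - l)₊`. Integrating these bounds over the levels `l > t` against
`(l - t) ^ (p - 1)` controls the tails of `‖Df‖ ^ k` in `L^p` by those of `‖D^k f‖`.
-/

open scoped NNReal Nat

section Interpolation

open Polynomial in
lemma exists_sum_mul_eval_eq_eval_derivative {K ι : Type*} [Field K]
    {s : Finset ι} {v : ι → K} (hv : Set.InjOn v s) (a : K) :
    ∃ c : ι → K, ∀ P : K[X], P.degree < s.card →
      ∑ i ∈ s, c i * P.eval (v i) = P.derivative.eval a := by
  classical
  refine ⟨fun i ↦ (Lagrange.basis s v i).derivative.eval a, fun P hP ↦ ?_⟩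
  conv_rhs => rw [Lagrange.eq_interpolate hv hP]
  simp only [Lagrange.interpolate_apply, derivative_sum, eval_finsetSum, derivative_C_mul,
    eval_mul, eval_C]
  exact Finset.sum_congr rfl fun _ _ ↦ mul_comm _ _

lemma exists_sum_mul_pow_eq_ite (k : ℕ) :
    ∃ c : ℕ → ℝ, ∀ i < k, ∑ j ∈ Finset.range k, c j * (j : ℝ) ^ i = if i = 1 then 1 else 0 := by
  obtain ⟨c, hc⟩ := exists_sum_mul_eval_eq_eval_derivative (s := Finset.range k)
    (v := fun j : ℕ ↦ (j : ℝ)) Nat.cast_injective.injOn 0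
  refine ⟨c, fun i hi ↦ ?_⟩
  have hXi := hc (Polynomial.X ^ i) (by simpa using hi)
  simp only [Polynomial.eval_pow, Polynomial.eval_X, Polynomial.derivative_X_pow] at hXi
  rw [hXi]
  rcases i with _ | _ | i <;> simp

end Interpolation

section SegmentAverage

variable {E : Type*} [AddCommGroup E] [Module ℝ E]

/-- The average of `G` over the segment from `x` to `x + v`. -/
noncomputable def segmentAverage (G : E → ℝ≥0∞) (v x : E) : ℝ≥0∞ :=
  ∫⁻ t in Set.Ioc (0 : ℝ) 1, G (x + t • v)

lemma sum_segmentAverage_le_add {G H : E → ℝ≥0∞} {a : ℝ≥0∞} (h : ∀ x, G x ≤ a + H x)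
    {ι : Type*} (s : Finset ι) (v : ι → E) (x : E) :
    ∑ i ∈ s, segmentAverage G (v i) x ≤ s.card * a + ∑ i ∈ s, segmentAverage H (v i) x := by
  have hterm : ∀ i ∈ s, segmentAverage G (v i) x ≤ a + segmentAverage H (v i) x := fun i _ ↦
    calc segmentAverage G (v i) x ≤ ∫⁻ t in Set.Ioc (0 : ℝ) 1, (a + H (x + t • v i)) :=
          lintegral_mono fun _ ↦ h _
      _ = a + segmentAverage H (v i) x := by
          rw [lintegral_add_left measurable_const]
          simp [segmentAverage]
  refine (Finset.sum_le_sum hterm).trans_eq ?_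
  rw [Finset.sum_add_distrib, Finset.sum_const, nsmul_eq_mul]

variable [MeasurableSpace E] [MeasurableAdd₂ E] [MeasurableSMul ℝ E] {G : E → ℝ≥0∞}

lemma measurable_comp_add_smul (hG : Measurable G) (v : E) :
    Measurable (Function.uncurry fun (x : E) (t : ℝ) ↦ G (x + t • v)) :=
  hG.comp (measurable_fst.add (measurable_snd.smul_const v))

lemma measurable_segmentAverage (hG : Measurable G) (v : E) : Measurable (segmentAverage G v) :=
  (measurable_comp_add_smul hG v).lintegral_prod_right'

lemma lintegral_segmentAverage (μ : Measure E) [SFinite μ] [μ.IsAddRightInvariant]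
    (hG : Measurable G) (v : E) : ∫⁻ x, segmentAverage G v x ∂μ = ∫⁻ x, G x ∂μ := by
  simp only [segmentAverage]
  rw [lintegral_lintegral_swap (measurable_comp_add_smul hG v).aemeasurable]
  simp [lintegral_add_right_eq_self G]

end SegmentAverage

section TaylorRemainder

variable {E F : Type*} [NormedAddCommGroup E] [NormedSpace ℝ E]
  [NormedAddCommGroup F] [NormedSpace ℝ F]

/-- The error at `x + h` of the Taylor polynomial of `f` at `x` of degree less than `k`. -/
noncomputable def taylorRemainder (f : E → F) (k : ℕ) (x h : E) : F :=
  f (x + h) - ∑ i ∈ Finset.range k, (i ! : ℝ)⁻¹ • iteratedFDeriv ℝ i f x fun _ ↦ h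

lemma enorm_taylorRemainder_le [CompleteSpace F] {f : E → F} {k : ℕ} (hk : k ≠ 0)
    (hf : ContDiff ℝ k f) (x h : E) :
    ‖taylorRemainder f k x h‖ₑ ≤
      ‖h‖ₑ ^ k * segmentAverage (fun y ↦ ‖iteratedFDeriv ℝ k f y‖ₑ) h x := by
  obtain ⟨n, rfl⟩ := Nat.exists_eq_succ_of_ne_zero hk
  have hfactorial : ‖(n ! : ℝ)⁻¹‖ₑ ≤ 1 := by
    rw [← ofReal_norm, ENNReal.ofReal_le_one, norm_inv, Real.norm_natCast]
    exact inv_le_one_of_one_le₀ (mod_cast n.factorial_pos)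
  have hweight : ∀ t ∈ Set.Ioc (0 : ℝ) 1, ‖(1 - t) ^ n‖ₑ ≤ 1 := fun t ht ↦ by
    rw [← ofReal_norm, ENNReal.ofReal_le_one, norm_pow, Real.norm_of_nonneg (by linarith [ht.2])]
    exact pow_le_one₀ (by linarith [ht.2]) (by linarith [ht.1])
  have hderiv : ∀ y, ‖iteratedFDeriv ℝ (n + 1) f y fun _ ↦ h‖ₑ ≤
      ‖h‖ₑ ^ (n + 1) * ‖iteratedFDeriv ℝ (n + 1) f y‖ₑ := fun y ↦ by
    have := (iteratedFDeriv ℝ (n + 1) f y).le_opNNNorm fun _ ↦ h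
    simp only [Finset.prod_const, Finset.card_univ, Fintype.card_fin] at this
    rw [mul_comm]
    exact ENNReal.coe_le_coe.2 this
  rw [taylorRemainder, map_add_eq_sum_add_integral_iteratedFDeriv (f := f)
    fun t _ ↦ mod_cast hf.contDiffAt, add_sub_cancel_left, enorm_smul,
    intervalIntegral.integral_of_le zero_le_one]
  calc _ ≤ 1 * ∫⁻ t in Set.Ioc (0 : ℝ) 1,
        ‖(1 - t) ^ n • iteratedFDeriv ℝ (n + 1) f (x + t • h) fun _ ↦ h‖ₑ :=
        mul_le_mul' hfactorial (enorm_integral_le_lintegral_enorm _)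
    _ ≤ ∫⁻ t in Set.Ioc (0 : ℝ) 1,
        ‖h‖ₑ ^ (n + 1) * ‖iteratedFDeriv ℝ (n + 1) f (x + t • h)‖ₑ := by
        rw [one_mul]
        refine setLIntegral_mono' measurableSet_Ioc fun t ht ↦ ?_
        rw [enorm_smul]
        exact (mul_le_mul' (hweight t ht) (hderiv _)).trans_eq (one_mul _)
    _ = _ := lintegral_const_mul' _ _ (by finiteness)

lemma exists_sum_smul_sub_taylorRemainder_eq_fderiv {k : ℕ} (hk : 2 ≤ k) :
    ∃ c : ℕ → ℝ, ∀ (f : E → F) (x h : E), ∑ j ∈ Finset.range k,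
      c j • (f (x + (j : ℝ) • h) - taylorRemainder f k x ((j : ℝ) • h)) = fderiv ℝ f x h := by
  obtain ⟨c, hc⟩ := exists_sum_mul_pow_eq_ite k
  refine ⟨c, fun f x h ↦ ?_⟩
  have hpolynomial : ∀ j : ℕ, f (x + (j : ℝ) • h) - taylorRemainder f k x ((j : ℝ) • h) =
      ∑ i ∈ Finset.range k, ((j : ℝ) ^ i * (i ! : ℝ)⁻¹) • iteratedFDeriv ℝ i f x fun _ ↦ h := by
    intro j
    rw [taylorRemainder, sub_sub_self]
    refine Finset.sum_congr rfl fun i _ ↦ ?_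
    rw [ContinuousMultilinearMap.map_smul_univ _ fun _ ↦ (j : ℝ)]
    simp [smul_smul, mul_comm]
  have hcoeff : ∀ i ∈ Finset.range k, ∑ j ∈ Finset.range k,
      c j • ((j : ℝ) ^ i * (i ! : ℝ)⁻¹) • iteratedFDeriv ℝ i f x (fun _ ↦ h) =
        if i = 1 then fderiv ℝ f x h else 0 := by
    intro i hi
    simp only [smul_smul, ← Finset.sum_smul, ← mul_assoc, ← Finset.sum_mul,
      hc i (Finset.mem_range.1 hi)]
    split_ifs with h1
    · subst h1
      simp
    · simp
  simp only [hpolynomial, Finset.smul_sum]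
  rw [Finset.sum_comm, Finset.sum_congr rfl hcoeff, Finset.sum_ite_eq',
    if_pos (Finset.mem_range.2 (by omega))]

end TaylorRemainder

section PointwiseBound

lemma pow_le_pow_mul_pow_sub_one_mul {a r K M l : ℝ} {k : ℕ} (hk : k ≠ 0) (ha : 0 ≤ a)
    (hr : 0 ≤ r) (hM : 0 < M) (hl : 0 < l) (hrk : r ^ k = M / l) (h : a * r ≤ K * M) :
    a ^ k ≤ K ^ k * M ^ (k - 1) * l := by
  have hpow : a ^ k * (M / l) ≤ K ^ k * M ^ k := by
    rw [← hrk, ← mul_pow, ← mul_pow]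
    exact pow_le_pow_left₀ (by positivity) h k
  rw [← le_div_iff₀ (by positivity)] at hpow
  refine hpow.trans_eq ?_
  rw [← pow_sub_one_mul hk M]
  field_simp

variable {E F : Type*} [NormedAddCommGroup E] [NormedSpace ℝ E]
  [NormedAddCommGroup F] [NormedSpace ℝ F]

lemma exists_enorm_le_mul_sum_enorm_apply_basis {ι : Type*} [Fintype ι] (b : Module.Basis ι ℝ E) :
    ∃ C : ℝ≥0, ∀ L : E →L[ℝ] F, ‖L‖ₑ ≤ C * ∑ i, ‖L (b i)‖ₑ := by
  obtain ⟨C, -, hC⟩ := b.exists_opNNNorm_le (F := F)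
  refine ⟨C, fun L ↦ ?_⟩
  have hL := hC (∑ i, ‖L (b i)‖₊) fun i ↦
    Finset.single_le_sum_of_canonicallyOrdered (f := fun i ↦ ‖L (b i)‖₊) (Finset.mem_univ i)
  simpa only [enorm, ENNReal.coe_mul, ENNReal.ofNNReal_finsetSum] using ENNReal.coe_le_coe.2 hL

variable [CompleteSpace F]

lemma exists_enorm_fderiv_apply_le {k : ℕ} (hk : 2 ≤ k) :
    ∃ C : ℝ≥0, ∀ (f : E → F) (M : ℝ≥0∞), ContDiff ℝ k f → (∀ x, ‖f x‖ₑ ≤ M) → ∀ x h,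
      ‖fderiv ℝ f x h‖ₑ ≤ C * (M + ‖h‖ₑ ^ k * ∑ j ∈ Finset.range k,
        segmentAverage (fun y ↦ ‖iteratedFDeriv ℝ k f y‖ₑ) ((j : ℝ) • h) x) := by
  obtain ⟨c, hc⟩ := exists_sum_smul_sub_taylorRemainder_eq_fderiv (E := E) (F := F) hk
  refine ⟨∑ j ∈ Finset.range k, ‖c j‖₊ * (1 + (j : ℝ≥0) ^ k), fun f M hf hM x h ↦ ?_⟩
  set A : ℕ → ℝ≥0∞ := fun j ↦
    segmentAverage (fun y ↦ ‖iteratedFDeriv ℝ k f y‖ₑ) ((j : ℝ) • h) x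
  have hsub : ∀ j ∈ Finset.range k,
      ‖f (x + (j : ℝ) • h) - taylorRemainder f k x ((j : ℝ) • h)‖ₑ ≤
        (1 + (j : ℝ≥0∞) ^ k) * (M + ‖h‖ₑ ^ k * ∑ j ∈ Finset.range k, A j) := by
    intro j hj
    calc _ ≤ M + ‖(j : ℝ) • h‖ₑ ^ k * A j :=
          enorm_sub_le.trans (add_le_add (hM _) (enorm_taylorRemainder_le (by omega) hf _ _))
      _ = M + (j : ℝ≥0∞) ^ k * (‖h‖ₑ ^ k * A j) := by
          rw [enorm_smul, mul_pow, mul_assoc, Real.enorm_natCast]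
      _ ≤ (M + ‖h‖ₑ ^ k * ∑ j ∈ Finset.range k, A j) +
          (j : ℝ≥0∞) ^ k * (M + ‖h‖ₑ ^ k * ∑ j ∈ Finset.range k, A j) := by
          gcongr
          · exact le_self_add
          · exact (mul_le_mul_right (Finset.single_le_sum_of_canonicallyOrdered hj) _).trans
              le_add_self
      _ = _ := by ring
  rw [← hc]
  calc _ ≤ ∑ j ∈ Finset.range k, ‖c j‖ₑ *
        ((1 + (j : ℝ≥0∞) ^ k) * (M + ‖h‖ₑ ^ k * ∑ j ∈ Finset.range k, A j)) := by
        refine (enorm_sum_le _ _).trans (Finset.sum_le_sum fun j hj ↦ ?_)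
        rw [enorm_smul]
        gcongr
        exact hsub j hj
    _ = _ := by
        push_cast
        simp only [← mul_assoc, ← Finset.sum_mul]
        rfl

variable [FiniteDimensional ℝ E]

lemma exists_enorm_fderiv_mul_enorm_le {k : ℕ} (hk : 2 ≤ k) :
    ∃ (s : Finset E) (C : ℝ≥0), ∀ (f : E → F) (M : ℝ≥0∞), ContDiff ℝ k f → (∀ x, ‖f x‖ₑ ≤ M) →
      ∀ (x : E) (r : ℝ), ‖fderiv ℝ f x‖ₑ * ‖r‖ₑ ≤ C * (M + ‖r‖ₑ ^ k *
        ∑ v ∈ s, segmentAverage (fun y ↦ ‖iteratedFDeriv ℝ k f y‖ₑ) (r • v) x) := by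
  classical
  let b := Module.finBasis ℝ E
  obtain ⟨C₁, hC₁⟩ := exists_enorm_le_mul_sum_enorm_apply_basis (F := F) b
  obtain ⟨C₂, hC₂⟩ := exists_enorm_fderiv_apply_le (E := E) (F := F) hk
  let s : Finset E := (Finset.univ ×ˢ Finset.range k).image fun a ↦ (a.2 : ℝ) • b a.1
  refine ⟨s, C₁ * ∑ i, C₂ * (1 + ‖b i‖₊ ^ k * k), fun f M hf hM x r ↦ ?_⟩
  set A : E → ℝ≥0∞ := fun v ↦ segmentAverage (fun y ↦ ‖iteratedFDeriv ℝ k f y‖ₑ) (r • v) x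
  have hrange : ∀ i, ∑ j ∈ Finset.range k, A ((j : ℝ) • b i) ≤ k * ∑ v ∈ s, A v := fun i ↦ by
    simpa using Finset.sum_le_card_nsmul (Finset.range k) _ (∑ v ∈ s, A v) fun j hj ↦
      Finset.single_le_sum_of_canonicallyOrdered (f := A)
        (Finset.mem_image_of_mem _ (Finset.mk_mem_product (Finset.mem_univ i) hj))
  have hdirection : ∀ i, ‖fderiv ℝ f x (b i)‖ₑ * ‖r‖ₑ ≤
      C₂ * (1 + ‖b i‖ₑ ^ k * k) * (M + ‖r‖ₑ ^ k * ∑ v ∈ s, A v) := by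
    intro i
    calc ‖fderiv ℝ f x (b i)‖ₑ * ‖r‖ₑ = ‖fderiv ℝ f x (r • b i)‖ₑ := by
          rw [map_smul, enorm_smul, mul_comm]
      _ ≤ C₂ * (M + ‖b i‖ₑ ^ k * (‖r‖ₑ ^ k * ∑ j ∈ Finset.range k, A ((j : ℝ) • b i))) := by
          refine (hC₂ f M hf hM x (r • b i)).trans_eq ?_
          simp only [A, enorm_smul, mul_pow, smul_comm r, mul_assoc, mul_left_comm (‖r‖ₑ ^ k)]
      _ ≤ C₂ * (M + ‖b i‖ₑ ^ k * (‖r‖ₑ ^ k * (k * ∑ v ∈ s, A v))) := by grw [hrange i]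
      _ ≤ C₂ * (M + ‖b i‖ₑ ^ k * (‖r‖ₑ ^ k * (k * ∑ v ∈ s, A v))) +
          C₂ * (‖r‖ₑ ^ k * ∑ v ∈ s, A v + ‖b i‖ₑ ^ k * k * M) := le_self_add
      _ = _ := by ring
  calc ‖fderiv ℝ f x‖ₑ * ‖r‖ₑ ≤ C₁ * ∑ i, ‖fderiv ℝ f x (b i)‖ₑ * ‖r‖ₑ := by
        grw [hC₁ (fderiv ℝ f x), mul_assoc, Finset.sum_mul]
    _ ≤ C₁ * ∑ i, C₂ * (1 + ‖b i‖ₑ ^ k * k) * (M + ‖r‖ₑ ^ k * ∑ v ∈ s, A v) :=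
        mul_le_mul_right (Finset.sum_le_sum fun i _ ↦ hdirection i) _
    _ = _ := by
        push_cast
        simp only [← mul_assoc, ← Finset.sum_mul]
        rfl

lemma exists_norm_fderiv_pow_le_of_sum_segmentAverage_le {k : ℕ} (hk : 2 ≤ k) :
    ∃ (s : Finset E) (C : ℝ), 0 < C ∧ ∀ (f : E → F) (M l r : ℝ), ContDiff ℝ k f →
      (∀ x, ‖f x‖ ≤ M) → 0 < M → 0 < l → 0 ≤ r → r ^ k = M / l → ∀ x,
      ∑ v ∈ s, segmentAverage (fun y ↦ ENNReal.ofReal (‖iteratedFDeriv ℝ k f y‖ - l)) (r • v) x ≤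
        ENNReal.ofReal l →
      ‖fderiv ℝ f x‖ ^ k ≤ C * M ^ (k - 1) * l := by
  obtain ⟨s, C, hC⟩ := exists_enorm_fderiv_mul_enorm_le (E := E) (F := F) hk
  refine ⟨s, ((C + 1) * (s.card + 2)) ^ k, by positivity,
    fun f M l r hf hfM hM hl hr hrk x hx ↦ ?_⟩
  have hsplit : ∀ y, ‖iteratedFDeriv ℝ k f y‖ₑ ≤
      ENNReal.ofReal l + ENNReal.ofReal (‖iteratedFDeriv ℝ k f y‖ - l) := fun y ↦ by
    rw [← ofReal_norm]
    exact (ENNReal.ofReal_le_ofReal (by linarith)).trans ENNReal.ofReal_add_le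
  have henorm : ‖fderiv ℝ f x‖ₑ * ‖r‖ₑ ≤ C * (ENNReal.ofReal M + ‖r‖ₑ ^ k *
      (s.card * ENNReal.ofReal l + ENNReal.ofReal l)) := by
    grw [hC f (ENNReal.ofReal M) hf (fun y ↦ ?_) x r, sum_segmentAverage_le_add hsplit, hx]
    rw [← ofReal_norm]
    exact ENNReal.ofReal_le_ofReal (hfM y)
  have hnorm : ‖fderiv ℝ f x‖ * r ≤ (C + 1) * (s.card + 2) * M := by
    have hreal := ENNReal.toReal_mono (by finiteness) henorm
    rw [ENNReal.toReal_mul, ENNReal.toReal_mul, ENNReal.toReal_add (by finiteness) (by finiteness),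
      ENNReal.toReal_mul, ENNReal.toReal_add (by finiteness) (by finiteness)] at hreal
    simp only [toReal_enorm, ENNReal.toReal_pow, ENNReal.toReal_mul, ENNReal.toReal_natCast,
      ENNReal.coe_toReal, ENNReal.toReal_ofReal hM.le, ENNReal.toReal_ofReal hl.le,
      Real.norm_of_nonneg hr, hrk] at hreal
    calc ‖fderiv ℝ f x‖ * r ≤ C * (M + M / l * (s.card * l + l)) := hreal
      _ = C * (s.card + 2) * M := by field_simp; ring
      _ ≤ _ := by gcongr; linarith
  exact pow_le_pow_mul_pow_sub_one_mul (by omega) (norm_nonneg _) hr hM hl hrk hnorm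

end PointwiseBound

section TailMoment

variable {α : Type*} [MeasurableSpace α]

/-- The `q`-th moment `∫ (f - t)₊ ^ q` of the part of `f` above the level `t`. -/
noncomputable def tailMoment (μ : Measure α) (q : ℝ) (f : α → ℝ) (t : ℝ) : ℝ≥0∞ :=
  ∫⁻ x, ENNReal.ofReal ((max (f x - t) 0) ^ q) ∂μ

/-- Equi-integrability of the `q`-th powers of a family of functions, in the sense that the tail
moments of order `q` tend to `0` uniformly over the family as the level tends to `∞`. -/
def TailEquiintegrable {ι : Type*} (μ : Measure α) (q : ℝ) (f : ι → α → ℝ) : Prop :=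
  Tendsto (fun t ↦ ⨆ i, tailMoment μ q (f i) t) atTop (𝓝 0)

lemma tailEquiintegrable_of_tailMoment_le {ι β : Type*} [MeasurableSpace β] {μ : Measure α}
    {ρ : Measure β} {p q : ℝ} {f : ι → α → ℝ} {g : ι → β → ℝ} {K : ℝ≥0∞} (hK : K ≠ ∞)
    {τ : ℝ → ℝ} (hτ : Tendsto τ atTop atTop) (hg : TailEquiintegrable ρ p g)
    (hfg : ∀ i, ∀ t ≥ 0, tailMoment μ q (f i) t ≤ K * tailMoment ρ p (g i) (τ t)) :
    TailEquiintegrable μ q f := by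
  have hlim : Tendsto (fun t ↦ K * ⨆ i, tailMoment ρ p (g i) (τ t)) atTop (𝓝 0) := by
    simpa using ENNReal.Tendsto.const_mul (hg.comp hτ) (Or.inr hK)
  refine tendsto_of_tendsto_of_tendsto_of_le_of_le' tendsto_const_nhds hlim
    (Eventually.of_forall fun _ ↦ zero_le) ?_
  filter_upwards [eventually_ge_atTop 0] with t ht
  refine iSup_le fun i ↦ (hfg i t ht).trans ?_
  gcongr
  exact le_iSup (fun i ↦ tailMoment ρ p (g i) (τ t)) i

lemma max_sub_zero_pow_le {a t : ℝ} (ht : 0 ≤ t) {k : ℕ} (hk : k ≠ 0) :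
    max (a - t) 0 ^ k ≤ max (a ^ k - t ^ k) 0 := by
  rcases le_total a t with hat | hta
  · rw [max_eq_right (sub_nonpos.2 hat), zero_pow hk]
    exact le_max_right _ _
  · rw [max_eq_left (sub_nonneg.2 hta)]
    refine le_max_of_le_left (le_sub_iff_add_le.2 ?_)
    simpa using pow_add_pow_le (sub_nonneg.2 hta) ht hk

lemma tailMoment_natCast_mul_le (μ : Measure α) (f : α → ℝ) {k : ℕ} (hk : k ≠ 0)
    {p B t : ℝ} (hp : 0 ≤ p) (hB : 0 < B) (ht : 0 ≤ t) :
    tailMoment μ (k * p) f t ≤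
      ENNReal.ofReal (B ^ p) * tailMoment μ p (fun x ↦ f x ^ k / B) (t ^ k / B) := by
  rw [tailMoment, tailMoment, ← lintegral_const_mul' _ _ ENNReal.ofReal_ne_top]
  refine lintegral_mono fun x ↦ ?_
  rw [← ENNReal.ofReal_mul (by positivity), ← Real.mul_rpow hB.le (le_max_right _ _),
    Real.rpow_mul (le_max_right _ _), Real.rpow_natCast, mul_max_of_nonneg _ _ hB.le, mul_sub,
    mul_div_cancel₀ _ hB.ne', mul_div_cancel₀ _ hB.ne', mul_zero]
  gcongr
  exact max_sub_zero_pow_le ht hk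

end TailMoment

section WeakType

lemma rpow_sub_one_eq_rpow_sub_two_mul {x p : ℝ} (hx : 0 ≤ x) (hp : p ≠ 1) :
    x ^ (p - 1) = x ^ (p - 2) * x := by
  have hexp : p - 2 + 1 = p - 1 := by ring
  rw [← Real.rpow_add_one' hx (hexp ▸ sub_ne_zero.2 hp), hexp]

lemma integral_rpow_sub_two_mul_sub {p y : ℝ} (hp : 1 < p) (hy : 0 ≤ y) :
    ∫ l in 0..y, l ^ (p - 2) * (y - l) = y ^ p / (p * (p - 1)) := by
  have hexpand : Set.EqOn (fun l ↦ l ^ (p - 2) * (y - l))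
      (fun l ↦ l ^ (p - 2) * y - l ^ (p - 1)) (Set.uIcc 0 y) := fun l hl ↦ by
    rw [Set.uIcc_of_le hy] at hl
    simp only [rpow_sub_one_eq_rpow_sub_two_mul hl.1 hp.ne', mul_sub]
  have hp₁ : p - 1 ≠ 0 := by linarith
  have hp₀ : p ≠ 0 := by linarith
  have hypow : y ^ (p - 1) * y = y ^ p := by
    rw [← Real.rpow_add_one' hy (by simpa using hp₀), sub_add_cancel]
  rw [intervalIntegral.integral_congr hexpand, intervalIntegral.integral_sub
      ((intervalIntegral.intervalIntegrable_rpow' (by linarith)).mul_const y)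
      (intervalIntegral.intervalIntegrable_rpow' (by linarith)),
    intervalIntegral.integral_mul_const, integral_rpow (Or.inl (by linarith)),
    integral_rpow (Or.inl (by linarith)), sub_add_cancel, show p - 2 + 1 = p - 1 by ring,
    Real.zero_rpow hp₁, Real.zero_rpow hp₀, sub_zero, sub_zero, div_mul_eq_mul_div, hypow]
  field_simp
  ring

lemma lintegral_Ioi_rpow_sub_two_mul_ofReal_sub {p y : ℝ} (hp : 1 < p) (hy : 0 ≤ y) :
    ∫⁻ l in Set.Ioi (0 : ℝ), ENNReal.ofReal (l ^ (p - 2)) * ENNReal.ofReal (y - l) =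
      ENNReal.ofReal (y ^ p / (p * (p - 1))) := by
  have hvanish : ∀ l ∈ Set.Ioi y, ENNReal.ofReal (l ^ (p - 2)) * ENNReal.ofReal (y - l) = 0 :=
    fun l hl ↦ by rw [ENNReal.ofReal_of_nonpos (sub_nonpos.2 (le_of_lt hl)), mul_zero]
  have hproduct : ∀ l ∈ Set.Ioc 0 y, ENNReal.ofReal (l ^ (p - 2)) * ENNReal.ofReal (y - l) =
      ENNReal.ofReal (l ^ (p - 2) * (y - l)) :=
    fun l hl ↦ (ENNReal.ofReal_mul (Real.rpow_nonneg hl.1.le _)).symm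
  have hnonneg : ∀ l ∈ Set.Ioc 0 y, 0 ≤ l ^ (p - 2) * (y - l) :=
    fun l hl ↦ mul_nonneg (Real.rpow_nonneg hl.1.le _) (sub_nonneg.2 hl.2)
  have hint : IntervalIntegrable (fun l : ℝ ↦ l ^ (p - 2) * (y - l)) volume 0 y :=
    (intervalIntegral.intervalIntegrable_rpow' (by linarith)).mul_continuousOn (by fun_prop)
  rw [← Set.Ioc_union_Ioi_eq_Ioi hy,
    lintegral_union measurableSet_Ioi (Set.Ioc_disjoint_Ioi le_rfl),
    setLIntegral_eq_zero measurableSet_Ioi hvanish, add_zero,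
    setLIntegral_congr_fun measurableSet_Ioc hproduct,
    ← ofReal_integral_eq_lintegral_ofReal hint.1
      ((ae_restrict_iff' measurableSet_Ioc).2 (Eventually.of_forall hnonneg)),
    ← intervalIntegral.integral_of_le hy, integral_rpow_sub_two_mul_sub hp hy]

variable {α : Type*} [MeasurableSpace α] {μ : Measure α} {N : ℝ≥0} {A g : α → ℝ}

/-- A weak-type `(1, 1)` inequality for `A` in terms of `g` truncated at the same level, such as
the one relating a maximal function to the underlying function. -/
def TruncatedWeakType (μ : Measure α) (N : ℝ≥0) (A g : α → ℝ) : Prop :=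
  ∀ l > 0, ENNReal.ofReal l * μ {x | l < A x} ≤ N * ∫⁻ x, ENNReal.ofReal (g x - l) ∂μ

namespace TruncatedWeakType

lemma max_sub_zero (h : TruncatedWeakType μ N A g) {t : ℝ} (ht : 0 ≤ t) :
    TruncatedWeakType μ N (fun x ↦ max (A x - t) 0) (fun x ↦ max (g x - t) 0) := by
  intro l hl
  have hset : {x | l < max (A x - t) 0} ⊆ {x | t + l < A x} := fun x hx ↦ by
    have hx : l < max (A x - t) 0 := hx
    exact lt_sub_iff_add_lt'.1 ((lt_max_iff.1 hx).resolve_right hl.not_gt)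
  calc _ ≤ ENNReal.ofReal (t + l) * μ {x | t + l < A x} := by
        gcongr
        linarith
    _ ≤ N * ∫⁻ x, ENNReal.ofReal (g x - (t + l)) ∂μ := h _ (by positivity)
    _ ≤ _ := by
        refine mul_le_mul_right (lintegral_mono fun x ↦ ENNReal.ofReal_le_ofReal ?_) _
        linarith [le_max_left (g x - t) 0]

lemma lintegral_rpow_le [SFinite μ] (h : TruncatedWeakType μ N A g) (hA : Measurable A)
    (hg : Measurable g) (hA₀ : ∀ x, 0 ≤ A x) (hg₀ : ∀ x, 0 ≤ g x) {p : ℝ} (hp : 1 < p) :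
    ∫⁻ x, ENNReal.ofReal (A x ^ p) ∂μ ≤
      ENNReal.ofReal (1 / (p - 1)) * N * ∫⁻ x, ENNReal.ofReal (g x ^ p) ∂μ := by
  have hlevel : ∀ l ∈ Set.Ioi (0 : ℝ), μ {x | l < A x} * ENNReal.ofReal (l ^ (p - 1)) ≤
      N * ∫⁻ x, ENNReal.ofReal (l ^ (p - 2)) * ENNReal.ofReal (g x - l) ∂μ := by
    intro l hl
    rw [rpow_sub_one_eq_rpow_sub_two_mul (le_of_lt hl) hp.ne',
      ENNReal.ofReal_mul (Real.rpow_nonneg (le_of_lt hl) _),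
      lintegral_const_mul' _ _ ENNReal.ofReal_ne_top, mul_left_comm, mul_left_comm (N : ℝ≥0∞),
      mul_comm (μ _)]
    exact mul_le_mul_right (h l hl) _
  have hswap : ∫⁻ l in Set.Ioi (0 : ℝ), ∫⁻ x,
      ENNReal.ofReal (l ^ (p - 2)) * ENNReal.ofReal (g x - l) ∂μ =
        ∫⁻ x, ENNReal.ofReal (g x ^ p / (p * (p - 1))) ∂μ := by
    rw [lintegral_lintegral_swap (by unfold Function.uncurry; fun_prop)]
    exact lintegral_congr fun x ↦ lintegral_Ioi_rpow_sub_two_mul_ofReal_sub hp (hg₀ x)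
  have hp₀ : 0 < p := by linarith
  have hconst : ∀ x, ENNReal.ofReal (g x ^ p / (p * (p - 1))) =
      ENNReal.ofReal (1 / (p * (p - 1))) * ENNReal.ofReal (g x ^ p) := fun x ↦ by
    rw [← ENNReal.ofReal_mul' (Real.rpow_nonneg (hg₀ x) p), one_div_mul_eq_div]
  calc ∫⁻ x, ENNReal.ofReal (A x ^ p) ∂μ = ENNReal.ofReal p * ∫⁻ l in Set.Ioi (0 : ℝ),
        μ {x | l < A x} * ENNReal.ofReal (l ^ (p - 1)) :=
        lintegral_rpow_eq_lintegral_meas_lt_mul μ (Eventually.of_forall hA₀) hA.aemeasurable hp₀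
    _ ≤ ENNReal.ofReal p * (N * (ENNReal.ofReal (1 / (p * (p - 1))) *
        ∫⁻ x, ENNReal.ofReal (g x ^ p) ∂μ)) := by
        grw [setLIntegral_mono' measurableSet_Ioi hlevel]
        rw [lintegral_const_mul' _ _ ENNReal.coe_ne_top, hswap, lintegral_congr hconst,
          lintegral_const_mul' _ _ ENNReal.ofReal_ne_top]
    _ = _ := by
        have : 1 / (p - 1) = p * (1 / (p * (p - 1))) := by field_simp
        rw [this, ENNReal.ofReal_mul hp₀.le]
        ring

lemma tailMoment_le [SFinite μ] (h : TruncatedWeakType μ N A g) (hA : Measurable A)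
    (hg : Measurable g) {p t : ℝ} (hp : 1 < p) (ht : 0 ≤ t) :
    tailMoment μ p A t ≤ ENNReal.ofReal (1 / (p - 1)) * N * tailMoment μ p g t :=
  (h.max_sub_zero ht).lintegral_rpow_le (by fun_prop) (by fun_prop) (fun _ ↦ le_max_right _ _)
    (fun _ ↦ le_max_right _ _) hp

end TruncatedWeakType

end WeakType

section EquiIntegrability

variable {E F : Type*} [NormedAddCommGroup E] [NormedSpace ℝ E] [FiniteDimensional ℝ E]
  [MeasurableSpace E] [BorelSpace E] [NormedAddCommGroup F] [NormedSpace ℝ F] [CompleteSpace F]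

lemma exists_truncatedWeakType_norm_fderiv_pow (μ : Measure E) [SFinite μ] [μ.IsAddRightInvariant]
    {k : ℕ} (hk : 2 ≤ k) :
    ∃ (N : ℝ≥0) (C : ℝ), 0 < C ∧ ∀ (f : E → F) (M : ℝ), 0 < M → ContDiff ℝ k f →
      (∀ x, ‖f x‖ ≤ M) → TruncatedWeakType μ N (fun x ↦ ‖fderiv ℝ f x‖ ^ k / (C * M ^ (k - 1)))
        (fun x ↦ ‖iteratedFDeriv ℝ k f x‖) := by
  obtain ⟨s, C, hC₀, hC⟩ :=
    exists_norm_fderiv_pow_le_of_sum_segmentAverage_le (E := E) (F := F) hk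
  refine ⟨s.card, C, hC₀, fun f M hM hf hfM l hl ↦ ?_⟩
  set G : E → ℝ≥0∞ := fun y ↦ ENNReal.ofReal (‖iteratedFDeriv ℝ k f y‖ - l)
  have hG : Measurable G :=
    ((hf.continuous_iteratedFDeriv le_rfl).norm.sub continuous_const).measurable.ennreal_ofReal
  obtain ⟨r, hr, hrk⟩ : ∃ r : ℝ, 0 ≤ r ∧ r ^ k = M / l :=
    ⟨(M / l) ^ (k : ℝ)⁻¹, by positivity, Real.rpow_inv_natCast_pow (by positivity) (by omega)⟩
  have hset : {x | l < ‖fderiv ℝ f x‖ ^ k / (C * M ^ (k - 1))} ⊆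
      {x | ENNReal.ofReal l ≤ ∑ v ∈ s, segmentAverage G (r • v) x} := by
    intro x hx
    by_contra hlt
    have hle := hC f M l r hf hfM hM hl hr hrk x (not_le.1 hlt).le
    exact (((lt_div_iff₀' (by positivity)).1 hx).trans_le hle).false
  calc _ ≤ ENNReal.ofReal l * μ {x | ENNReal.ofReal l ≤ ∑ v ∈ s, segmentAverage G (r • v) x} := by
        gcongr
    _ ≤ ∫⁻ x, ∑ v ∈ s, segmentAverage G (r • v) x ∂μ := mul_meas_ge_le_lintegral
        (Finset.measurable_fun_sum _ fun _ _ ↦ measurable_segmentAverage hG _) _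
    _ = (s.card : ℝ≥0) * ∫⁻ x, G x ∂μ := by
        rw [lintegral_finsetSum _ fun _ _ ↦ measurable_segmentAverage hG _]
        simp [lintegral_segmentAverage μ hG]

lemma exists_tailMoment_norm_fderiv_le (μ : Measure E) [SFinite μ] [μ.IsAddRightInvariant]
    {k : ℕ} (hk : 2 ≤ k) {p M : ℝ} (hp : 1 < p) (hM : 0 < M) :
    ∃ (K : ℝ≥0) (B : ℝ), 0 < B ∧ ∀ f : E → F, ContDiff ℝ k f → (∀ x, ‖f x‖ ≤ M) → ∀ t ≥ 0,
      tailMoment μ (k * p) (fun x ↦ ‖fderiv ℝ f x‖) t ≤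
        K * tailMoment μ p (fun x ↦ ‖iteratedFDeriv ℝ k f x‖) (t ^ k / B) := by
  obtain ⟨N, C, hC, hweak⟩ := exists_truncatedWeakType_norm_fderiv_pow (F := F) μ hk
  set B := C * M ^ (k - 1)
  have hB : 0 < B := by positivity
  refine ⟨(B ^ p).toNNReal * ((1 / (p - 1)).toNNReal * N), B, hB, fun f hf hfM t ht ↦ ?_⟩
  have hfderiv : Measurable fun x ↦ ‖fderiv ℝ f x‖ ^ k / B :=
    (((hf.continuous_fderiv (by norm_cast; omega)).norm.pow k).div_const B).measurable
  have hiterated : Measurable fun x ↦ ‖iteratedFDeriv ℝ k f x‖ :=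
    (hf.continuous_iteratedFDeriv le_rfl).norm.measurable
  grw [tailMoment_natCast_mul_le μ _ (by omega) (by linarith) hB ht,
    (hweak f M hM hf hfM).tailMoment_le hfderiv hiterated hp (by positivity), ← mul_assoc]
  rfl

theorem Wkp_equiintegrable_implies_W1kp_equiintegrable_general {ι : Type*} (μ : Measure E)
    [SFinite μ] [μ.IsAddRightInvariant] {k : ℕ} (hk : 2 ≤ k) {p : ℝ} (hp : 1 < p)
    {u : ι → E → F} (hu : ∀ i, ContDiff ℝ k (u i)) (hbdd : ∃ M : ℝ, ∀ i x, ‖u i x‖ ≤ M)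
    (hequi : TailEquiintegrable μ p fun i x ↦ ‖iteratedFDeriv ℝ k (u i) x‖) :
    TailEquiintegrable μ (k * p) fun i x ↦ ‖fderiv ℝ (u i) x‖ := by
  obtain ⟨M, hM⟩ := hbdd
  have hM₁ : ∀ i x, ‖u i x‖ ≤ max M 1 := fun i x ↦ (hM i x).trans (le_max_left _ _)
  obtain ⟨K, B, hB, hbound⟩ :=
    exists_tailMoment_norm_fderiv_le (F := F) μ hk hp (lt_max_of_lt_right one_pos : 0 < max M 1)
  have hlevel : Tendsto (fun t : ℝ ↦ t ^ k / B) atTop atTop :=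
    (tendsto_pow_atTop (by omega)).atTop_div_const hB
  exact tailEquiintegrable_of_tailMoment_le ENNReal.coe_ne_top hlevel hequi
    fun i ↦ hbound (u i) (hu i) (hM₁ i)

end EquiIntegrability

/-- `W^{k,p}`-equi-integrability together with a uniform `L^∞` bound implies
`W^{1,kp}`-equi-integrability (Proposition 3.5). -/
theorem Wkp_equiintegrable_implies_W1kp_equiintegrable
    (m ν k : ℕ) (hm : 1 ≤ m) (hν : 1 ≤ ν) (hk : 2 ≤ k)
    (p : ℝ) (hp1 : 1 < p)
    (u : ℕ → EuclideanSpace ℝ (Fin m) → EuclideanSpace ℝ (Fin ν))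
    (hu : ∀ n, ContDiff ℝ k (u n))
    (hbdd : ∃ M : ℝ, ∀ n x, ‖u n x‖ ≤ M)
    (hequi : Tendsto
      (fun t : ℝ => ⨆ n, ∫⁻ x,
        ENNReal.ofReal ((max (‖iteratedFDeriv ℝ k (u n) x‖ - t) 0) ^ p))
      atTop (𝓝 0)) :
    Tendsto
      (fun t : ℝ => ⨆ n, ∫⁻ x,
        ENNReal.ofReal ((max (‖fderiv ℝ (u n) x‖ - t) 0) ^ ((k : ℝ) * p)))
      atTop (𝓝 0) := by
  exact Wkp_equiintegrable_implies_W1kp_equiintegrable_general volume hk hp1 hu hbdd hequi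
end

section
/- For all integers m ≥ 1 and k ≥ 1 there exist constants C > 0 and κ > 0 such that for every integer ν ≥ 1, every open set Ω ⊆ ℝ^m, every bounded k-times continuously differentiable map u : Ω → ℝ^ν, every t > 0, every ρ > 0 and every x ∈ Ω with the open ball B_ρ(x) contained in Ω and (sup_{Ω}‖u‖)^k ≤ κ t^k ρ^k, one has (‖Du(x)‖ − t)_+ ≤ C ( M( ((sup_{Ω}‖u‖)^{k−1} ‖D^k u‖ − κ t^k)_+ )(x) )^{1/k}. -/
open MeasureTheory Filter Topology ENNReal

/-- The maximal function of `f : Ω → [0,∞]`: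
`(Mf)(x) = sup_{r>0} λ(B_r(x))⁻¹ ∫_{Ω ∩ B_r(x)} f`. -/
noncomputable def maximalFn {m : ℕ} (Ω : Set (EuclideanSpace ℝ (Fin m)))
    (f : EuclideanSpace ℝ (Fin m) → ℝ≥0∞) (x : EuclideanSpace ℝ (Fin m)) : ℝ≥0∞ :=
  ⨆ (r : ℝ) (_ : 0 < r),
    (volume (Metric.ball x r))⁻¹ * ∫⁻ y in Ω ∩ Metric.ball x r, f y

/-!
Let `S` bound `‖u‖` on `Ω`, let `B_r(x) ⊆ Ω`, and let `A` bound the averages of `‖D^k u‖` over the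
balls `B_τ(x)` with `τ ≤ r`. For `k ≥ 2` and a unit-ball direction `v`, Taylor's formula along the
segment from `x` to `x + r v`, combined with a numerical differentiation formula at `0` that is
exact on polynomials of degree less than `k`, gives
`r ‖Du(x) v‖ ≲ S + r ^ k ∫₀¹ ‖D^k u (x + s r v)‖ ds`.
The average of this integral over the unit ball of directions is at most `A`, because at fixed `s`
one averages `‖D^k u‖` over `B_{sr}(x)`. So in a ball of directions of radius `1 / 4` on which
`‖Du(x)‖ ≤ 8 ‖Du(x) v‖` some `v` makes the integral at most `4 ^ m A`, whence
`r ‖Du(x)‖ ≤ C (S + r ^ k A)`. For `k = 1` the inequality `‖Du(x)‖ ≤ A` is immediate from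
continuity.

Truncating at the level `κ t ^ k = (q t) ^ k` costs that much in every average, so
`S ^ (k - 1) A ≤ (q t) ^ k + M ≤ σ ^ k` with `σ = q t + M ^ (1 / k)`, where `M` is the maximal
function at `x`. The hypothesis on `S` makes `r = S / σ` an admissible radius, and the inequality
becomes `‖Du(x)‖ ≤ 2 C σ`, which is `t + 2 C M ^ (1 / k)` for `q = 1 / (2 C)`.
-/

open Metric Set
open scoped NNReal Nat

section NumericalDifferentiation

theorem sum_pow_mul_coeff_lagrangeBasis {K ι : Type*} [Field K] [DecidableEq ι] {s : Finset ι}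
    {v : ι → K} (hv : InjOn v s) {j : ℕ} (hj : j < s.card) (l : ℕ) :
    ∑ i ∈ s, v i ^ j * (Lagrange.basis s v i).coeff l = if l = j then 1 else 0 := by
  have hdeg : (Polynomial.X ^ j : Polynomial K).degree < s.card := by
    rw [Polynomial.degree_X_pow]
    exact_mod_cast hj
  have hinterp := congrArg (Polynomial.coeff · l) (Lagrange.eq_interpolate hv hdeg)
  simpa only [Lagrange.interpolate_apply, Polynomial.finsetSum_coeff, Polynomial.coeff_C_mul,
    Polynomial.eval_pow, Polynomial.eval_X, Polynomial.coeff_X_pow] using hinterp.symm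

/-- The weight of the node `(i + 1) / k` in the formula computing `p'(0)` from the values of `p` at
`1 / k, 2 / k, …, 1`, exact for polynomials `p` of degree less than `k`. The node `0` is left out so
that every node spans a nondegenerate segment with `0`. -/
noncomputable def derivZeroWeight (k i : ℕ) : ℝ :=
  (Lagrange.basis (Finset.range k) (fun i : ℕ => ((i : ℝ) + 1) / k) i).coeff 1

theorem sum_derivZeroWeight_smul_sum_pow_smul {F : Type*} [AddCommGroup F] [Module ℝ F] {k : ℕ}
    (hk : 1 < k) (c : ℕ → F) :
    ∑ i ∈ Finset.range k, derivZeroWeight k i •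
      ∑ j ∈ Finset.range k, (((i : ℝ) + 1) / k) ^ j • c j = c 1 := by
  have hk0 : (k : ℝ) ≠ 0 := by positivity
  have hinj : InjOn (fun i : ℕ => ((i : ℝ) + 1) / k) (Finset.range k) := fun i _ i' _ h => by
    simpa [div_left_inj' hk0] using h
  have hmoment : ∀ j ∈ Finset.range k,
      ∑ i ∈ Finset.range k, derivZeroWeight k i * (((i : ℝ) + 1) / k) ^ j =
        if 1 = j then 1 else 0 := fun j hj => by
    simpa only [mul_comm, derivZeroWeight]
      using sum_pow_mul_coeff_lagrangeBasis hinj (by simpa using hj) 1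
  calc
    _ = ∑ j ∈ Finset.range k,
          (∑ i ∈ Finset.range k, derivZeroWeight k i * (((i : ℝ) + 1) / k) ^ j) • c j := by
      simp only [Finset.smul_sum, smul_smul, Finset.sum_smul]
      exact Finset.sum_comm
    _ = ∑ j ∈ Finset.range k, (if 1 = j then 1 else 0 : ℝ) • c j :=
      Finset.sum_congr rfl fun j hj => by rw [hmoment j hj]
    _ = c 1 := by simp [hk]

/-- The norm of the numerical differentiation formula with weights `derivZeroWeight`, as a
functional on bounded functions. -/
noncomputable def derivZeroConst (k : ℕ) : ℝ≥0 :=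
  ∑ i ∈ Finset.range k, ‖derivZeroWeight k i‖₊

end NumericalDifferentiation

section Taylor

theorem enorm_sub_taylorWithinEval_le_lintegral {F : Type*} [NormedAddCommGroup F]
    [NormedSpace ℝ F] [CompleteSpace F] {f : ℝ → F} {a b : ℝ} {n : ℕ} (hab : a ≤ b)
    (hf : ContDiffOn ℝ (n + 1 : ℕ) f (Icc a b)) :
    ‖f b - taylorWithinEval f n (Icc a b) a b‖ₑ ≤ ENNReal.ofReal ((b - a) ^ n / n !) *
      ∫⁻ s in Ioc a b, ‖iteratedDerivWithin (n + 1) f (Icc a b) s‖ₑ := by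
  rw [← uIcc_of_le hab] at hf ⊢
  rw [taylor_integral_remainder hf, intervalIntegral.integral_of_le hab,
    ← lintegral_const_mul' _ _ ENNReal.ofReal_ne_top]
  refine (enorm_integral_le_lintegral_enorm _).trans
    (setLIntegral_mono' measurableSet_Ioc fun s hs => ?_)
  have hbs : 0 ≤ b - s := sub_nonneg.2 hs.2
  rw [enorm_smul, Real.enorm_of_nonneg (by positivity)]
  gcongr
  exact hs.1.le

theorem iteratedDerivWithin_comp_add_smul {𝕜 E F : Type*} [NontriviallyNormedField 𝕜]
    [NormedAddCommGroup E] [NormedSpace 𝕜 E] [NormedAddCommGroup F] [NormedSpace 𝕜 F]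
    {Ω : Set E} {u : E → F} {n : ℕ} {I : Set 𝕜} {x w : E} {s : 𝕜} (hu : ContDiffOn 𝕜 n u Ω)
    (hΩ : UniqueDiffOn 𝕜 Ω) (hI : UniqueDiffOn 𝕜 I) (hline : MapsTo (fun s => x + s • w) I Ω)
    (hs : s ∈ I) :
    iteratedDerivWithin n (fun s => u (x + s • w)) I s =
      iteratedFDerivWithin 𝕜 n u Ω (x + s • w) fun _ => w := by
  induction n generalizing s with
  | zero => simp
  | succ n ih =>
    have hlineDeriv : HasDerivWithinAt (fun s : 𝕜 => x + s • w) w I s := by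
      simpa using ((hasDerivWithinAt_id s I).smul_const w).const_add x
    have hderiv := (hu.differentiableOn_iteratedFDerivWithin (mod_cast n.lt_succ_self) hΩ _
      (hline hs)).hasFDerivWithinAt.comp_hasDerivWithinAt s hlineDeriv hline
    have happly := (ContinuousMultilinearMap.apply 𝕜 (fun _ : Fin n => E) F
      fun _ => w).hasFDerivAt.comp_hasDerivWithinAt s hderiv
    rw [iteratedDerivWithin_succ, iteratedFDerivWithin_succ_apply_left,
      derivWithin_congr (fun s hs => ih (hu.of_le (mod_cast n.le_succ)) hs)
        (ih (hu.of_le (mod_cast n.le_succ)) hs)]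
    exact happly.derivWithin (hI s hs)

variable {E F : Type*} [NormedAddCommGroup E] [NormedSpace ℝ E] [NormedAddCommGroup F]
  [NormedSpace ℝ F] {Ω : Set E} {u : E → F} {x w : E}

theorem enorm_sub_sum_iteratedFDerivWithin_le_lintegral [CompleteSpace F] {n : ℕ} {b : ℝ}
    (hu : ContDiffOn ℝ (n + 1 : ℕ) u Ω) (hΩ : UniqueDiffOn ℝ Ω)
    (hseg : MapsTo (fun s : ℝ => x + s • w) (Icc 0 1) Ω) (hb : b ∈ Ioc (0 : ℝ) 1) :
    ‖u (x + b • w) - ∑ j ∈ Finset.range (n + 1),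
        b ^ j • (j ! : ℝ)⁻¹ • iteratedFDerivWithin ℝ j u Ω x fun _ => w‖ₑ ≤
      ‖w‖ₑ ^ (n + 1) *
        ∫⁻ s in Ioc (0 : ℝ) 1, ‖iteratedFDerivWithin ℝ (n + 1) u Ω (x + s • w)‖ₑ := by
  have hIcc : Icc 0 b ⊆ Icc (0 : ℝ) 1 := Icc_subset_Icc_right hb.2
  have hseg_b := hseg.mono_left hIcc
  have hderiv : ∀ j ≤ n + 1, ∀ s ∈ Icc 0 b,
      iteratedDerivWithin j (fun s : ℝ => u (x + s • w)) (Icc 0 b) s =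
        iteratedFDerivWithin ℝ j u Ω (x + s • w) fun _ => w := fun j hj s hs =>
    iteratedDerivWithin_comp_add_smul (hu.of_le (mod_cast hj)) hΩ (uniqueDiffOn_Icc hb.1) hseg_b hs
  have htaylor : taylorWithinEval (fun s : ℝ => u (x + s • w)) n (Icc 0 b) 0 b =
      ∑ j ∈ Finset.range (n + 1),
        b ^ j • (j ! : ℝ)⁻¹ • iteratedFDerivWithin ℝ j u Ω x fun _ => w := by
    rw [taylor_within_apply]
    refine Finset.sum_congr rfl fun j hj => ?_
    rw [hderiv j (Finset.mem_range.1 hj).le 0 (left_mem_Icc.2 hb.1.le), sub_zero, zero_smul,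
      add_zero, smul_smul, mul_comm]
  have hcoeff : ENNReal.ofReal ((b - 0) ^ n / n !) ≤ 1 := by
    rw [sub_zero, ENNReal.ofReal_le_one]
    exact div_le_one_of_le₀ ((pow_le_one₀ hb.1.le hb.2).trans (mod_cast n.factorial_pos))
      (by positivity)
  rw [← htaylor]
  calc
    _ ≤ ENNReal.ofReal ((b - 0) ^ n / n !) * ∫⁻ s in Ioc 0 b,
          ‖iteratedDerivWithin (n + 1) (fun s : ℝ => u (x + s • w)) (Icc 0 b) s‖ₑ :=
      enorm_sub_taylorWithinEval_le_lintegral hb.1.le (hu.comp (by fun_prop) hseg_b)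
    _ ≤ ∫⁻ s in Ioc 0 b, ‖w‖ₑ ^ (n + 1) * ‖iteratedFDerivWithin ℝ (n + 1) u Ω (x + s • w)‖ₑ := by
      refine (mul_le_of_le_one_left' hcoeff).trans
        (setLIntegral_mono' measurableSet_Ioc fun s hs => ?_)
      rw [hderiv (n + 1) le_rfl s (Ioc_subset_Icc_self hs), mul_comm]
      simpa [enorm_eq_nnnorm] using ENNReal.coe_le_coe.2
        ((iteratedFDerivWithin ℝ (n + 1) u Ω (x + s • w)).le_opNNNorm fun _ => w)
    _ ≤ _ := by
      rw [lintegral_const_mul' _ _ (ENNReal.pow_ne_top enorm_ne_top)]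
      gcongr
      exact hb.2

theorem enorm_fderivWithin_apply_le_of_completeSpace [CompleteSpace F] {k : ℕ} {S : ℝ≥0∞}
    (hk : 1 < k) (hu : ContDiffOn ℝ k u Ω) (hΩ : UniqueDiffOn ℝ Ω) (hS : ∀ y ∈ Ω, ‖u y‖ₑ ≤ S)
    (hseg : MapsTo (fun s : ℝ => x + s • w) (Icc 0 1) Ω) :
    ‖fderivWithin ℝ u Ω x w‖ₑ ≤ derivZeroConst k *
      (S + ‖w‖ₑ ^ k * ∫⁻ s in Ioc (0 : ℝ) 1, ‖iteratedFDerivWithin ℝ k u Ω (x + s • w)‖ₑ) := by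
  have hx : x ∈ Ω := by simpa using hseg (left_mem_Icc.2 zero_le_one)
  obtain ⟨n, rfl⟩ := Nat.exists_eq_succ_of_ne_zero (Nat.ne_zero_of_lt hk)
  set node : ℕ → ℝ := fun i => ((i : ℝ) + 1) / (n + 1 : ℕ)
  set taylorSum : ℝ → F := fun b => ∑ j ∈ Finset.range (n + 1),
    b ^ j • (j ! : ℝ)⁻¹ • iteratedFDerivWithin ℝ j u Ω x fun _ => w
  set R := ‖w‖ₑ ^ (n + 1) *
    ∫⁻ s in Ioc (0 : ℝ) 1, ‖iteratedFDerivWithin ℝ (n + 1) u Ω (x + s • w)‖ₑ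
  have hnode : ∀ i ∈ Finset.range (n + 1), node i ∈ Ioc (0 : ℝ) 1 := fun i hi =>
    ⟨by positivity, div_le_one_of_le₀ (mod_cast Finset.mem_range.1 hi) (by positivity)⟩
  have hexact : fderivWithin ℝ u Ω x w =
      ∑ i ∈ Finset.range (n + 1), derivZeroWeight (n + 1) i • taylorSum (node i) := by
    rw [sum_derivZeroWeight_smul_sum_pow_smul hk,
      iteratedFDerivWithin_one_apply (hΩ x hx)]
    simp
  have hbound : ∀ i ∈ Finset.range (n + 1), ‖taylorSum (node i)‖ₑ ≤ S + R := fun i hi => by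
    rw [← sub_sub_cancel (u (x + node i • w)) (taylorSum (node i))]
    exact enorm_sub_le.trans (add_le_add (hS _ (hseg (Ioc_subset_Icc_self (hnode i hi))))
      (enorm_sub_sum_iteratedFDerivWithin_le_lintegral hu hΩ hseg (hnode i hi)))
  calc
    _ ≤ ∑ i ∈ Finset.range (n + 1), ‖derivZeroWeight (n + 1) i • taylorSum (node i)‖ₑ := by
      rw [hexact]
      exact enorm_sum_le _ _
    _ ≤ ∑ i ∈ Finset.range (n + 1), ‖derivZeroWeight (n + 1) i‖ₑ * (S + R) :=
      Finset.sum_le_sum fun i hi => by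
        rw [enorm_smul]
        gcongr
        exact hbound i hi
    _ = derivZeroConst (n + 1) * (S + R) := by
      rw [← Finset.sum_mul, derivZeroConst, ENNReal.ofNNReal_finsetSum]
      rfl

theorem enorm_fderivWithin_apply_le {k : ℕ} {S : ℝ≥0∞}
    (hk : 1 < k) (hu : ContDiffOn ℝ k u Ω) (hΩ : UniqueDiffOn ℝ Ω) (hS : ∀ y ∈ Ω, ‖u y‖ₑ ≤ S)
    (hseg : MapsTo (fun s : ℝ => x + s • w) (Icc 0 1) Ω) :
    ‖fderivWithin ℝ u Ω x w‖ₑ ≤ derivZeroConst k *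
      (S + ‖w‖ₑ ^ k * ∫⁻ s in Ioc (0 : ℝ) 1, ‖iteratedFDerivWithin ℝ k u Ω (x + s • w)‖ₑ) := by
  have hx : x ∈ Ω := by simpa using hseg (left_mem_Icc.2 zero_le_one)
  -- The integral form of Taylor's remainder is only available in a complete space.
  let ι : F →ₗᵢ[ℝ] UniformSpace.Completion F := UniformSpace.Completion.toComplₗᵢ
  have hfderiv : fderivWithin ℝ (ι ∘ u) Ω x w = ι (fderivWithin ℝ u Ω x w) := by
    have hdiff := hu.differentiableOn (mod_cast (Nat.ne_zero_of_lt hk)) x hx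
    exact DFunLike.congr_fun ((ι.toContinuousLinearMap.hasFDerivAt.comp_hasFDerivWithinAt x
      hdiff.hasFDerivWithinAt).fderivWithin (hΩ x hx)) w
  have hiterated : ∀ s ∈ Ioc (0 : ℝ) 1, ‖iteratedFDerivWithin ℝ k (ι ∘ u) Ω (x + s • w)‖ₑ =
      ‖iteratedFDerivWithin ℝ k u Ω (x + s • w)‖ₑ := fun s hs => by
    have hmem := hseg (Ioc_subset_Icc_self hs)
    simpa only [ofReal_norm] using congrArg ENNReal.ofReal
      (ι.norm_iteratedFDerivWithin_comp_left (hu _ hmem) hΩ hmem le_rfl)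
  have hcompletion := enorm_fderivWithin_apply_le_of_completeSpace hk
    (ι.contDiff.comp_contDiffOn hu) hΩ
    (fun y hy => (ι.enorm_map (u y)).trans_le (hS y hy)) hseg
  rwa [hfderiv, ι.enorm_map, setLIntegral_congr_fun measurableSet_Ioc hiterated] at hcompletion

end Taylor

section Averages

theorem laverage_ball_le_maximalFn {m : ℕ} {Ω : Set (EuclideanSpace ℝ (Fin m))}
    {x : EuclideanSpace ℝ (Fin m)} {r : ℝ} (hr : 0 < r) (hball : ball x r ⊆ Ω)
    (f : EuclideanSpace ℝ (Fin m) → ℝ≥0∞) : ⨍⁻ y in ball x r, f y ∂volume ≤ maximalFn Ω f x := by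
  rw [setLAverage_eq, ENNReal.div_eq_inv_mul, ← inter_eq_right.2 hball]
  exact le_iSup₂_of_le r hr (by rw [inter_eq_right.2 hball])

theorem laverage_ofReal_le_laverage_truncation_add {α : Type*} [MeasurableSpace α] (μ : Measure α)
    (g : α → ℝ) (c : ℝ) :
    ⨍⁻ y, ENNReal.ofReal (g y) ∂μ ≤
      ⨍⁻ y, ENNReal.ofReal (max (g y - c) 0) ∂μ + ENNReal.ofReal c := by
  simp only [laverage_eq']
  calc
    _ ≤ ∫⁻ y, (ENNReal.ofReal (max (g y - c) 0) + ENNReal.ofReal c) ∂(μ univ)⁻¹ • μ :=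
      lintegral_mono fun y => by
        refine (ENNReal.ofReal_le_ofReal ?_).trans ENNReal.ofReal_add_le
        linarith [le_max_left (g y - c) 0]
    _ ≤ _ := by
      rw [lintegral_add_right _ measurable_const, lintegral_const, Measure.smul_apply, smul_eq_mul]
      gcongr
      exact mul_le_of_le_one_right' (ENNReal.inv_mul_le_one _)

theorem add_smul_smul_mem_ball {E : Type*} [NormedAddCommGroup E] [NormedSpace ℝ E] {x v : E}
    {r s : ℝ} (hr : 0 < r) (hv : v ∈ ball (0 : E) 1) (hs : s ∈ Icc (0 : ℝ) 1) :
    x + s • r • v ∈ ball x r := by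
  rw [mem_ball_zero_iff] at hv
  rw [mem_ball, dist_self_add_left, norm_smul, norm_smul, Real.norm_of_nonneg hs.1,
    Real.norm_of_nonneg hr.le]
  exact (mul_le_of_le_one_left (by positivity) hs.2).trans_lt (mul_lt_of_lt_one_right hr hv)

variable {E : Type*} [NormedAddCommGroup E] [NormedSpace ℝ E] [FiniteDimensional ℝ E]
  [MeasurableSpace E] [BorelSpace E] {μ : Measure E} [μ.IsAddHaarMeasure]

theorem laverage_unitBall_comp_add_smul (f : E → ℝ≥0∞) (x : E) {τ : ℝ} (hτ : 0 < τ) :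
    ⨍⁻ v in ball 0 1, f (x + τ • v) ∂μ = ⨍⁻ y in ball x τ, f y ∂μ := by
  set c := ENNReal.ofReal |(τ ^ Module.finrank ℝ E)⁻¹|
  have hc : c ≠ 0 := by positivity
  have hpre : (fun v => x + τ • v) ⁻¹' ball x τ = ball (0 : E) 1 := by
    ext v
    simp [norm_smul, abs_of_pos hτ, hτ]
  have hemb : MeasurableEmbedding (fun v : E => x + τ • v) :=
    ((Homeomorph.smulOfNeZero τ hτ.ne').trans (Homeomorph.addLeft x)).measurableEmbedding
  have hmap : μ.map (fun v => x + τ • v) = c • μ := by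
    refine (Measure.map_map (measurable_const_add x) (measurable_const_smul τ)).symm.trans ?_
    rw [Measure.map_addHaar_smul μ hτ.ne', Measure.map_smul, map_add_left_eq_self]
  have hint : ∫⁻ v in ball 0 1, f (x + τ • v) ∂μ = c * ∫⁻ y in ball x τ, f y ∂μ := by
    rw [← hpre, ← hemb.lintegral_map, ← hemb.restrict_map, hmap, Measure.restrict_smul,
      lintegral_smul_measure, smul_eq_mul]
  have hvol : μ (ball 0 1) = c * μ (ball x τ) := by
    rw [← hpre, ← hemb.map_apply, hmap, Measure.smul_apply, smul_eq_mul]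
  rw [setLAverage_eq, setLAverage_eq, hint, hvol, ENNReal.mul_div_mul_left _ _ hc ofReal_ne_top]

theorem laverage_ball_le_mul_laverage_unitBall {c : E} {ε : ℝ} (hε : 0 < ε)
    (hsub : ball c ε ⊆ ball 0 1) (f : E → ℝ≥0∞) :
    ⨍⁻ v in ball c ε, f v ∂μ ≤
      (ENNReal.ofReal ε ^ Module.finrank ℝ E)⁻¹ * ⨍⁻ v in ball 0 1, f v ∂μ := by
  have hε0 : ENNReal.ofReal ε ^ Module.finrank ℝ E ≠ 0 := by positivity
  rw [setLAverage_eq, setLAverage_eq, Measure.addHaar_ball_of_pos μ c hε,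
    ENNReal.ofReal_pow hε.le, ENNReal.div_eq_inv_mul, ENNReal.div_eq_inv_mul,
    ENNReal.mul_inv (.inl hε0) (.inl (ENNReal.pow_ne_top ofReal_ne_top)), mul_assoc]
  gcongr

variable {x : E} {r : ℝ} {f : E → ℝ≥0∞} {A : ℝ≥0∞}

theorem le_of_laverage_ball_le (hr : 0 < r) (hf : ContinuousOn f (ball x r))
    (hA : ∀ τ ∈ Ioc 0 r, ⨍⁻ y in ball x τ, f y ∂μ ≤ A) : f x ≤ A := by
  by_contra! hlt
  obtain ⟨τ, hτ, hτA⟩ := Metric.eventually_nhds_iff_ball.1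
    ((hf.continuousAt (ball_mem_nhds x hr)).eventually (lt_mem_nhds hlt))
  have hmin : 0 < min τ r := lt_min hτ hr
  obtain ⟨y, hy, hyA⟩ := exists_le_setLAverage (measure_ball_pos μ x hmin).ne'
    measure_ball_lt_top.ne
    ((hf.mono (ball_subset_ball (min_le_right τ r))).aemeasurable measurableSet_ball)
  exact (hτA y (ball_subset_ball (min_le_left τ r) hy)).not_ge
    (hyA.trans (hA _ ⟨hmin, min_le_right τ r⟩))

theorem aemeasurable_comp_add_smul_smul (hr : 0 < r) (hf : ContinuousOn f (ball x r)) :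
    AEMeasurable (fun p : E × ℝ => f (x + p.2 • r • p.1))
      ((μ.restrict (ball 0 1)).prod (volume.restrict (Ioc 0 1))) := by
  rw [Measure.prod_restrict]
  refine ContinuousOn.aemeasurable (hf.comp (by fun_prop) fun p hp => ?_)
    (measurableSet_ball.prod measurableSet_Ioc)
  exact add_smul_smul_mem_ball hr hp.1 (Ioc_subset_Icc_self hp.2)

theorem laverage_unitBall_lintegral_ray_le (hr : 0 < r) (hf : ContinuousOn f (ball x r))
    (hA : ∀ τ ∈ Ioc 0 r, ⨍⁻ y in ball x τ, f y ∂μ ≤ A) :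
    ⨍⁻ v in ball 0 1, (∫⁻ s in Ioc (0 : ℝ) 1, f (x + s • r • v)) ∂μ ≤ A := by
  have hpos : μ (ball 0 1) ≠ 0 := (measure_ball_pos μ 0 one_pos).ne'
  have hfin : μ (ball 0 1) ≠ ∞ := measure_ball_lt_top.ne
  rw [setLAverage_eq, ENNReal.div_le_iff hpos hfin,
    lintegral_lintegral_swap (aemeasurable_comp_add_smul_smul hr hf)]
  calc
    _ ≤ ∫⁻ _ in Ioc (0 : ℝ) 1, A * μ (ball 0 1) := by
      refine setLIntegral_mono' measurableSet_Ioc fun s hs => ?_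
      have hscale := laverage_unitBall_comp_add_smul (μ := μ) f x (mul_pos hs.1 hr)
      simp only [mul_smul] at hscale
      rw [← ENNReal.div_le_iff hpos hfin, ← setLAverage_eq, hscale]
      exact hA _ ⟨mul_pos hs.1 hr, mul_le_of_le_one_left hr.le hs.2⟩
    _ = A * μ (ball 0 1) := by simp

theorem exists_mem_ball_lintegral_ray_le {c : E} {ε : ℝ} (hε : 0 < ε)
    (hsub : ball c ε ⊆ ball 0 1) (hr : 0 < r) (hf : ContinuousOn f (ball x r))
    (hA : ∀ τ ∈ Ioc 0 r, ⨍⁻ y in ball x τ, f y ∂μ ≤ A) :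
    ∃ v ∈ ball c ε, ∫⁻ s in Ioc (0 : ℝ) 1, f (x + s • r • v) ≤
      (ENNReal.ofReal ε ^ Module.finrank ℝ E)⁻¹ * A := by
  have hmeas : AEMeasurable (fun v => ∫⁻ s in Ioc (0 : ℝ) 1, f (x + s • r • v))
      (μ.restrict (ball c ε)) :=
    (aemeasurable_comp_add_smul_smul hr hf).lintegral_prod_right'.mono_measure
      (Measure.restrict_mono_set μ hsub)
  obtain ⟨v, hv, hle⟩ := exists_le_setLAverage (measure_ball_pos μ c hε).ne'
    measure_ball_lt_top.ne hmeas
  refine ⟨v, hv, hle.trans ((laverage_ball_le_mul_laverage_unitBall hε hsub _).trans ?_)⟩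
  gcongr
  exact laverage_unitBall_lintegral_ray_le hr hf hA

end Averages

section Interpolation

theorem exists_ball_subset_unitBall_enorm_le {E F : Type*} [NormedAddCommGroup E] [NormedSpace ℝ E]
    [NormedAddCommGroup F] [NormedSpace ℝ F] (L : E →L[ℝ] F) :
    ∃ c : E, ball c (1 / 4) ⊆ ball 0 1 ∧ ∀ v ∈ ball c (1 / 4), ‖L‖ₑ ≤ 8 * ‖L v‖ₑ := by
  obtain hL | hL := (norm_nonneg L).eq_or_lt'
  · exact ⟨0, ball_subset_ball (by norm_num), fun v _ => by simp [← ofReal_norm, hL]⟩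
  obtain ⟨e, he, hLe⟩ := L.exists_lt_apply_of_lt_opNorm (show 3 / 4 * ‖L‖ < ‖L‖ by linarith)
  have hc : ‖(1 / 2 : ℝ) • e‖ < 1 / 2 := by
    rw [norm_smul, Real.norm_of_nonneg (by norm_num)]
    linarith
  refine ⟨(1 / 2 : ℝ) • e, fun v hv => ?_, fun v hv => ?_⟩
  all_goals rw [mem_ball, dist_eq_norm] at hv
  · rw [mem_ball_zero_iff]
    linarith [norm_le_norm_add_norm_sub' v ((1 / 2 : ℝ) • e)]
  · have hLc : ‖L ((1 / 2 : ℝ) • e)‖ = 1 / 2 * ‖L e‖ := by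
      rw [map_smul, norm_smul, Real.norm_of_nonneg (by norm_num)]
    have hLsub : ‖L ((1 / 2 : ℝ) • e) - L v‖ ≤ ‖L‖ * (1 / 4) := by
      rw [norm_sub_rev, ← map_sub]
      exact (L.le_opNorm _).trans (by gcongr)
    have hLv : ‖L‖ ≤ 8 * ‖L v‖ := by
      linarith [norm_le_norm_add_norm_sub' (L ((1 / 2 : ℝ) • e)) (L v)]
    simpa [enorm_eq_nnnorm] using ENNReal.coe_le_coe.2 (show ‖L‖₊ ≤ 8 * ‖L v‖₊ from hLv)

/-- The constant in the interpolation inequality `ofReal_mul_enorm_fderivWithin_le` on a space of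
dimension `d`: `8` is the loss from restricting to directions in a ball of radius `1 / 4`, and
`4 ^ d` the loss from averaging over that ball only; the summand `1` makes it serve for `k = 1`. -/
noncomputable def interpolationConst (d k : ℕ) : ℝ≥0 :=
  8 * 4 ^ d * (derivZeroConst k + 1)

theorem one_le_interpolationConst (d k : ℕ) : 1 ≤ interpolationConst d k :=
  one_le_mul_of_one_le_of_one_le
    (one_le_mul_of_one_le_of_one_le (by norm_num) (one_le_pow₀ (by norm_num))) (by simp)

variable {E F : Type*} [NormedAddCommGroup E] [NormedSpace ℝ E] [FiniteDimensional ℝ E]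
  [MeasurableSpace E] [BorelSpace E] {μ : Measure E} [μ.IsAddHaarMeasure]
  [NormedAddCommGroup F] [NormedSpace ℝ F] {Ω : Set E} {u : E → F} {x : E} {k : ℕ}

theorem ofReal_mul_enorm_fderivWithin_le_of_one_lt {r : ℝ} {S A : ℝ≥0∞} (hk : 1 < k)
    (hΩ : IsOpen Ω) (hu : ContDiffOn ℝ k u Ω) (hS : ∀ y ∈ Ω, ‖u y‖ₑ ≤ S) (hr : 0 < r)
    (hball : ball x r ⊆ Ω)
    (hA : ∀ τ ∈ Ioc 0 r, ⨍⁻ y in ball x τ, ‖iteratedFDerivWithin ℝ k u Ω y‖ₑ ∂μ ≤ A) :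
    ENNReal.ofReal r * ‖fderivWithin ℝ u Ω x‖ₑ ≤
      interpolationConst (Module.finrank ℝ E) k * (S + ENNReal.ofReal r ^ k * A) := by
  have hcont : ContinuousOn (fun y => ‖iteratedFDerivWithin ℝ k u Ω y‖ₑ) (ball x r) :=
    (hu.continuousOn_iteratedFDerivWithin le_rfl hΩ.uniqueDiffOn).enorm.mono hball
  obtain ⟨c, hsub, hL⟩ := exists_ball_subset_unitBall_enorm_le (fderivWithin ℝ u Ω x)
  obtain ⟨v, hv, hray⟩ := exists_mem_ball_lintegral_ray_le (by norm_num) hsub hr hcont hA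
  have hw : ‖r • v‖ₑ ≤ ENNReal.ofReal r := by
    rw [enorm_smul, Real.enorm_of_nonneg hr.le]
    refine mul_le_of_le_one_right' ?_
    simpa [← ofReal_norm] using (mem_ball_zero_iff.1 (hsub hv)).le
  have hinv : (ENNReal.ofReal (1 / 4) ^ Module.finrank ℝ E)⁻¹ = 4 ^ Module.finrank ℝ E := by
    rw [one_div, ENNReal.ofReal_inv_of_pos (by norm_num), ENNReal.inv_pow, inv_inv]
    norm_num
  rw [hinv] at hray
  calc
    ENNReal.ofReal r * ‖fderivWithin ℝ u Ω x‖ₑ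
      ≤ ENNReal.ofReal r * (8 * ‖fderivWithin ℝ u Ω x v‖ₑ) := by
      gcongr
      exact hL v hv
    _ = 8 * ‖fderivWithin ℝ u Ω x (r • v)‖ₑ := by
      rw [map_smul, enorm_smul, Real.enorm_of_nonneg hr.le]
      ring
    _ ≤ 8 * (derivZeroConst k * (S + ‖r • v‖ₑ ^ k *
          ∫⁻ s in Ioc (0 : ℝ) 1, ‖iteratedFDerivWithin ℝ k u Ω (x + s • r • v)‖ₑ)) := by
      gcongr
      exact enorm_fderivWithin_apply_le hk hu hΩ.uniqueDiffOn hS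
        fun s hs => hball (add_smul_smul_mem_ball hr (hsub hv) hs)
    _ ≤ 8 * ((derivZeroConst k + 1) * (4 ^ Module.finrank ℝ E * S +
          ENNReal.ofReal r ^ k * (4 ^ Module.finrank ℝ E * A))) := by
      gcongr
      · exact le_self_add
      · exact le_mul_of_one_le_left' (one_le_pow₀ (by norm_num))
    _ = _ := by
      simp only [interpolationConst, ENNReal.coe_mul, ENNReal.coe_pow, ENNReal.coe_add,
        ENNReal.coe_one, ENNReal.coe_ofNat]
      ring

theorem ofReal_mul_enorm_fderivWithin_le {r : ℝ} {S A : ℝ≥0∞} (hk : 1 ≤ k)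
    (hΩ : IsOpen Ω) (hu : ContDiffOn ℝ k u Ω) (hS : ∀ y ∈ Ω, ‖u y‖ₑ ≤ S) (hr : 0 < r)
    (hball : ball x r ⊆ Ω)
    (hA : ∀ τ ∈ Ioc 0 r, ⨍⁻ y in ball x τ, ‖iteratedFDerivWithin ℝ k u Ω y‖ₑ ∂μ ≤ A) :
    ENNReal.ofReal r * ‖fderivWithin ℝ u Ω x‖ₑ ≤
      interpolationConst (Module.finrank ℝ E) k * (S + ENNReal.ofReal r ^ k * A) := by
  obtain rfl | hk := hk.eq_or_lt
  · have hcont : ContinuousOn (fun y => ‖iteratedFDerivWithin ℝ 1 u Ω y‖ₑ) (ball x r) :=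
      (hu.continuousOn_iteratedFDerivWithin le_rfl hΩ.uniqueDiffOn).enorm.mono hball
    have hx : ‖fderivWithin ℝ u Ω x‖ₑ ≤ A := by
      rw [← ofReal_norm, ← norm_iteratedFDerivWithin_one u
        (hΩ.uniqueDiffOn x (hball (mem_ball_self hr))), ofReal_norm]
      exact le_of_laverage_ball_le (f := fun y => ‖iteratedFDerivWithin ℝ 1 u Ω y‖ₑ) hr hcont hA
    calc
      _ ≤ S + ENNReal.ofReal r ^ 1 * A := by
        rw [pow_one]
        exact le_add_left (by gcongr)
      _ ≤ _ := le_mul_of_one_le_left' (mod_cast one_le_interpolationConst _ 1)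
  · exact ofReal_mul_enorm_fderivWithin_le_of_one_lt hk hΩ hu hS hr hball hA

theorem norm_fderivWithin_le_of_laverage_le {S σ ρ : ℝ} (hk : 1 ≤ k) (hΩ : IsOpen Ω)
    (hu : ContDiffOn ℝ k u Ω) (hS : ∀ y ∈ Ω, ‖u y‖ ≤ S) (hσ : 0 < σ) (hρ : 0 < ρ)
    (hball : ball x ρ ⊆ Ω) (hSρ : S ≤ σ * ρ)
    (havg : ∀ τ ∈ Ioc 0 ρ, ⨍⁻ y in ball x τ,
      ENNReal.ofReal (S ^ (k - 1) * ‖iteratedFDerivWithin ℝ k u Ω y‖) ∂μ ≤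
        ENNReal.ofReal (σ ^ k)) :
    ‖fderivWithin ℝ u Ω x‖ ≤ 2 * interpolationConst (Module.finrank ℝ E) k * σ := by
  have hx : x ∈ Ω := hball (mem_ball_self hρ)
  obtain hS0 | hS0 := ((norm_nonneg _).trans (hS x hx)).eq_or_lt'
  · have hu0 : ∀ y ∈ Ω, u y = 0 := fun y hy => norm_le_zero_iff.1 (hS0 ▸ hS y hy)
    rw [fderivWithin_congr hu0 (hu0 x hx), fderivWithin_fun_const, Pi.zero_apply, norm_zero]
    positivity
  -- The radius balancing the two terms of the interpolation inequality.
  set r := S / σ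
  have hr : 0 < r := div_pos hS0 hσ
  have hrρ : r ≤ ρ := (div_le_iff₀' hσ).2 hSρ
  have hA : ∀ τ ∈ Ioc 0 r, ⨍⁻ y in ball x τ, ‖iteratedFDerivWithin ℝ k u Ω y‖ₑ ∂μ ≤
      ENNReal.ofReal (σ ^ k / S ^ (k - 1)) := fun τ hτ => by
    have hweighted := havg τ ⟨hτ.1, hτ.2.trans hrρ⟩
    simp only [ENNReal.ofReal_mul (pow_nonneg hS0.le (k - 1)), ofReal_norm, setLAverage_eq]
      at hweighted
    rw [lintegral_const_mul' _ _ ofReal_ne_top, mul_div_assoc, mul_comm] at hweighted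
    rw [setLAverage_eq, ENNReal.ofReal_div_of_pos (by positivity)]
    exact (ENNReal.le_div_iff_mul_le (.inl (by positivity)) (.inl ofReal_ne_top)).2 hweighted
  have hbalance : r ^ k * (σ ^ k / S ^ (k - 1)) = S := by
    rw [div_pow, mul_div_assoc', div_mul_cancel₀ _ (by positivity), div_eq_iff (by positivity),
      mul_pow_sub_one (Nat.one_le_iff_ne_zero.1 hk)]
  have hinterp := ofReal_mul_enorm_fderivWithin_le hk hΩ hu
    (fun y hy => by rw [← ofReal_norm]; exact ENNReal.ofReal_le_ofReal (hS y hy)) hr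
    ((ball_subset_ball hrρ).trans hball) hA
  rw [← ENNReal.ofReal_pow hr.le, ← ENNReal.ofReal_mul (by positivity), hbalance, ← ofReal_norm,
    ← ENNReal.ofReal_mul hr.le, ← ENNReal.ofReal_add hS0.le hS0.le, ← ENNReal.ofReal_coe_nnreal,
    ← ENNReal.ofReal_mul (by positivity), ENNReal.ofReal_le_ofReal_iff (by positivity)] at hinterp
  have hSr : S = σ * r := (mul_div_cancel₀ S hσ.ne').symm
  refine le_of_mul_le_mul_left ?_ hr
  linear_combination hinterp + 2 * interpolationConst (Module.finrank ℝ E) k * hSr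

theorem laverage_ball_le_maximalFn_truncation_add {m : ℕ} {Ω : Set (EuclideanSpace ℝ (Fin m))}
    {x : EuclideanSpace ℝ (Fin m)} {r : ℝ} (hr : 0 < r) (hball : ball x r ⊆ Ω)
    (g : EuclideanSpace ℝ (Fin m) → ℝ) (c : ℝ) :
    ⨍⁻ y in ball x r, ENNReal.ofReal (g y) ∂volume ≤
      maximalFn Ω (fun y => ENNReal.ofReal (max (g y - c) 0)) x + ENNReal.ofReal c := by
  refine (laverage_ofReal_le_laverage_truncation_add _ g c).trans ?_
  gcongr
  exact laverage_ball_le_maximalFn hr hball _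

theorem norm_fderivWithin_le_add_of_maximalFn_le {m : ℕ} {Ω : Set (EuclideanSpace ℝ (Fin m))}
    {u : EuclideanSpace ℝ (Fin m) → F} {x : EuclideanSpace ℝ (Fin m)} {S t ρ β C : ℝ} (hk : 1 ≤ k)
    (hC : 2 * interpolationConst m k ≤ C) (hΩ : IsOpen Ω) (hu : ContDiffOn ℝ k u Ω)
    (hS : ∀ y ∈ Ω, ‖u y‖ ≤ S) (ht : 0 < t) (hρ : 0 < ρ) (hβ : 0 ≤ β) (hball : ball x ρ ⊆ Ω)
    (hSρ : S ^ k ≤ C⁻¹ ^ k * t ^ k * ρ ^ k)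
    (hM : maximalFn Ω (fun y => ENNReal.ofReal
      (max (S ^ (k - 1) * ‖iteratedFDerivWithin ℝ k u Ω y‖ - C⁻¹ ^ k * t ^ k) 0)) x ≤
        ENNReal.ofReal (β ^ k)) :
    ‖fderivWithin ℝ u Ω x‖ ≤ t + C * β := by
  have hk0 : k ≠ 0 := Nat.one_le_iff_ne_zero.1 hk
  have hC0 : 0 < C :=
    (mul_pos two_pos (zero_lt_one.trans_le (mod_cast one_le_interpolationConst m k))).trans_le hC
  have hσ : 0 < C⁻¹ * t + β := by positivity
  have hSσ : S ≤ (C⁻¹ * t + β) * ρ := by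
    have hSt : S ≤ C⁻¹ * t * ρ :=
      le_of_pow_le_pow_left₀ hk0 (by positivity) (by rwa [mul_pow, mul_pow])
    exact hSt.trans (by gcongr; exact le_add_of_nonneg_right hβ)
  have havg : ∀ τ ∈ Ioc 0 ρ, ⨍⁻ y in ball x τ,
      ENNReal.ofReal (S ^ (k - 1) * ‖iteratedFDerivWithin ℝ k u Ω y‖) ∂volume ≤
        ENNReal.ofReal ((C⁻¹ * t + β) ^ k) := fun τ hτ => calc
    _ ≤ ENNReal.ofReal (β ^ k) + ENNReal.ofReal (C⁻¹ ^ k * t ^ k) :=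
      (laverage_ball_le_maximalFn_truncation_add hτ.1 ((ball_subset_ball hτ.2).trans hball) _
        _).trans (by gcongr)
    _ = ENNReal.ofReal ((C⁻¹ * t) ^ k + β ^ k) := by
      rw [← ENNReal.ofReal_add (by positivity) (by positivity), ← mul_pow, add_comm]
    _ ≤ _ := ENNReal.ofReal_le_ofReal (pow_add_pow_le (by positivity) hβ hk0)
  calc
    ‖fderivWithin ℝ u Ω x‖ ≤ 2 * interpolationConst m k * (C⁻¹ * t + β) := by
      simpa only [finrank_euclideanSpace_fin]
        using norm_fderivWithin_le_of_laverage_le hk hΩ hu hS hσ hρ hball hSσ havg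
    _ ≤ C * (C⁻¹ * t + β) := by gcongr
    _ = t + C * β := by rw [mul_add, mul_inv_cancel_left₀ hC0.ne']

end Interpolation

theorem pointwise_truncated_interpolation_general (m k : ℕ) (hk : 1 ≤ k) :
    ∃ C κ : ℝ, 0 < C ∧ 0 < κ ∧ ∀ (F : Type*) [NormedAddCommGroup F] [NormedSpace ℝ F]
      (Ω : Set (EuclideanSpace ℝ (Fin m))), IsOpen Ω →
      ∀ u : EuclideanSpace ℝ (Fin m) → F, ContDiffOn ℝ k u Ω →
      ∀ S : ℝ, (∀ y ∈ Ω, ‖u y‖ ≤ S) →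
      ∀ t ρ : ℝ, 0 < t → 0 < ρ →
      ∀ x, ball x ρ ⊆ Ω → S ^ k ≤ κ * t ^ k * ρ ^ k →
        ENNReal.ofReal (max (‖fderivWithin ℝ u Ω x‖ - t) 0) ≤
          ENNReal.ofReal C *
            maximalFn Ω (fun y => ENNReal.ofReal
              (max (S ^ (k - 1) * ‖iteratedFDerivWithin ℝ k u Ω y‖ - κ * t ^ k) 0)) x ^
              (1 / (k : ℝ)) := by
  have hk0 : k ≠ 0 := Nat.one_le_iff_ne_zero.1 hk
  set C : ℝ := 2 * interpolationConst m k
  have hC : 0 < C :=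
    mul_pos two_pos (zero_lt_one.trans_le (mod_cast one_le_interpolationConst m k))
  refine ⟨C, C⁻¹ ^ k, hC, by positivity, fun F _ _ Ω hΩ u hu S hS t ρ ht hρ x hball hSρ => ?_⟩
  set M := maximalFn Ω (fun y => ENNReal.ofReal
    (max (S ^ (k - 1) * ‖iteratedFDerivWithin ℝ k u Ω y‖ - C⁻¹ ^ k * t ^ k) 0)) x
  obtain hMtop | hMtop := eq_or_ne M ⊤
  · rw [hMtop, ENNReal.top_rpow_of_pos (by positivity),
      ENNReal.mul_top (ENNReal.ofReal_pos.2 hC).ne']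
    exact le_top
  obtain ⟨β, hβ⟩ : ∃ β : ℝ≥0, (β : ℝ≥0∞) = M ^ (1 / (k : ℝ)) :=
    ⟨_, ENNReal.coe_toNNReal (ENNReal.rpow_ne_top_of_nonneg (by positivity) hMtop)⟩
  have hMβ : M = ENNReal.ofReal ((β : ℝ) ^ k) := by
    rw [ENNReal.ofReal_pow β.coe_nonneg, ENNReal.ofReal_coe_nnreal, hβ, one_div,
      ENNReal.rpow_inv_natCast_pow hk0]
  rw [← hβ, ← ENNReal.ofReal_coe_nnreal, ← ENNReal.ofReal_mul hC.le]
  refine ENNReal.ofReal_le_ofReal (max_le (sub_le_iff_le_add'.2 ?_) (by positivity))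
  exact norm_fderivWithin_le_add_of_maximalFn_le hk le_rfl hΩ hu hS ht hρ β.coe_nonneg hball hSρ
    hMβ.le

/-- Pointwise truncated interpolation estimate (from the proof of
Proposition 3.3). -/
theorem pointwise_truncated_interpolation (m k : ℕ) (hm : 1 ≤ m) (hk : 1 ≤ k) :
    ∃ C κ : ℝ, 0 < C ∧ 0 < κ ∧ ∀ (ν : ℕ), 1 ≤ ν →
      ∀ (Ω : Set (EuclideanSpace ℝ (Fin m))), IsOpen Ω →
      ∀ (u : EuclideanSpace ℝ (Fin m) → EuclideanSpace ℝ (Fin ν)),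
        ContDiffOn ℝ k u Ω → Bornology.IsBounded (u '' Ω) →
      ∀ (t ρ : ℝ), 0 < t → 0 < ρ →
      ∀ x ∈ Ω, Metric.ball x ρ ⊆ Ω →
        (sSup ((fun y => ‖u y‖) '' Ω)) ^ k ≤ κ * t ^ k * ρ ^ k →
        ENNReal.ofReal (max (‖fderivWithin ℝ u Ω x‖ - t) 0) ≤
          ENNReal.ofReal C *
            (maximalFn Ω
              (fun y => ENNReal.ofReal
                (max ((sSup ((fun z => ‖u z‖) '' Ω)) ^ (k - 1) *
                  ‖iteratedFDerivWithin ℝ k u Ω y‖ - κ * t ^ k) 0)) x) ^ (1 / (k : ℝ)) := by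
  obtain ⟨C, κ, hC, hκ, hmain⟩ := pointwise_truncated_interpolation_general m k hk
  refine ⟨C, κ, hC, hκ, fun ν _ Ω hΩ u hu hbdd t ρ ht hρ x _ =>
    hmain _ Ω hΩ u hu _ (fun y hy => ?_) t ρ ht hρ x⟩
  obtain ⟨R, hR⟩ := hbdd.exists_norm_le
  exact le_csSup ⟨R, forall_mem_image.2 fun z hz => hR _ (mem_image_of_mem u hz)⟩
    (mem_image_of_mem _ hy)
end

section
/- Let m ≥ 1 and ν ≥ 1 be integers, s ∈ (0,1), p ∈ [1,∞), and let Ω ⊆ ℝ^m be a nonempty bounded convex open set. Let (u_n) be a sequence of measurable maps Ω → ℝ^ν such that for every n, ∫_Ω ‖u_n‖^p < ∞ and ∬_{Ω×Ω} ‖u_n(x)−u_n(y)‖^p/‖x−y‖^{m+sp} dx dy < ∞, and let u : Ω → ℝ^ν be measurable. Then the following are equivalent: (i) lim_{n→∞} ∫_Ω ‖u_n − u‖^p = 0 and lim_{n→∞} ∬_{Ω×Ω} ‖(u_n−u)(x) − (u_n−u)(y)‖^p/‖x−y‖^{m+sp} dx dy = 0; (ii) lim_{n→∞} ∫_Ω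 ‖u_n − u‖^p = 0 and lim_{ρ→0⁺} sup_n ∬_{{(x,y)∈Ω×Ω : ‖x−y‖<ρ}} ‖u_n(x)−u_n(y)‖^p/‖x−y‖^{m+sp} dx dy = 0. -/
open MeasureTheory Filter Topology ENNReal

/-!
Near the diagonal the energy of `u n - u₀` is controlled by those of `u n` and `u₀`, and the latter
by the supremum of the former (Fatou along an a.e. convergent subsequence); away from the diagonal
the kernel is bounded, so on a space of finite measure the energy is controlled by the `L^p` norm.
Conversely, a single function of finite energy has vanishing energy near the diagonal. This handles
`u₀` and finitely many of the `u n`, and the others are close to `u₀` in energy.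
-/

section ENNReal

variable {ι κ : Type*} {l : Filter ι}

lemma tendsto_iSup_nhds_zero_of_le_add {f : ℕ → ι → ℝ≥0∞} {b : ℕ → ℝ≥0∞} {c : ι → ℝ≥0∞}
    (hle : ∀ n i, f n i ≤ b n + c i) (hb : Tendsto b atTop (𝓝 0)) (hc : Tendsto c l (𝓝 0))
    (hf : ∀ n, Tendsto (f n) l (𝓝 0)) :
    Tendsto (fun i ↦ ⨆ n, f n i) l (𝓝 0) := by
  rw [ENNReal.tendsto_nhds_zero] at hb hc ⊢
  intro ε hε
  obtain ⟨N, hN⟩ := eventually_atTop.1 (hb _ (ENNReal.half_pos hε.ne'))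
  have hhead : ∀ᶠ i in l, ∀ n ∈ Set.Iio N, f n i ≤ ε :=
    (Set.finite_Iio N).eventually_all.2 fun n _ ↦ ENNReal.tendsto_nhds_zero.1 (hf n) ε hε
  filter_upwards [hhead, hc _ (ENNReal.half_pos hε.ne')] with i hi hci
  refine iSup_le fun n ↦ ?_
  rcases lt_or_ge n N with hn | hn
  · exact hi n hn
  · calc f n i ≤ b n + c i := hle n i
      _ ≤ ε / 2 + ε / 2 := add_le_add (hN n hn) hci
      _ = ε := ENNReal.add_halves ε

lemma tendsto_nhds_zero_of_le_add [l.NeBot] {l' : Filter κ} {e : κ → ℝ≥0∞} {c : ι → ℝ≥0∞}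
    {b : ι → κ → ℝ≥0∞} (hle : ∀ i k, e k ≤ c i + b i k) (hc : Tendsto c l (𝓝 0))
    (hb : ∀ᶠ i in l, Tendsto (b i) l' (𝓝 0)) :
    Tendsto e l' (𝓝 0) := by
  rw [ENNReal.tendsto_nhds_zero] at hc ⊢
  intro ε hε
  have hε2 : 0 < ε / 2 := ENNReal.half_pos hε.ne'
  obtain ⟨i, hci, hbi⟩ := ((hc _ hε2).and hb).exists
  filter_upwards [ENNReal.tendsto_nhds_zero.1 hbi _ hε2] with k hk
  calc e k ≤ c i + b i k := hle i k
    _ ≤ ε / 2 + ε / 2 := add_le_add hci hk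
    _ = ε := ENNReal.add_halves ε

lemma ofReal_norm_rpow {E : Type*} [NormedAddCommGroup E] {p : ℝ} (hp : 0 ≤ p) (x : E) :
    ENNReal.ofReal (‖x‖ ^ p) = ‖x‖ₑ ^ p := by
  rw [← ENNReal.ofReal_rpow_of_nonneg (norm_nonneg x) hp, ofReal_norm]

end ENNReal

section Lebesgue

variable {X : Type*} [MeasurableSpace X] {μ : Measure X}

lemma lintegral_prod_fst_add_snd [SFinite μ] {f : X → ℝ≥0∞} (hf : AEMeasurable f μ) :
    ∫⁻ z, (f z.1 + f z.2) ∂μ.prod μ = 2 * μ Set.univ * ∫⁻ x, f x ∂μ := by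
  rw [lintegral_add_left' hf.comp_fst, lintegral_prod _ hf.comp_fst, lintegral_prod _ hf.comp_snd]
  simp only [lintegral_const]
  rw [lintegral_mul_const'' _ hf]
  ring

lemma exists_seq_tendsto_ae_of_tendsto_lintegral_enorm_rpow {E : Type*} [NormedAddCommGroup E]
    {p : ℝ} (hp : 0 < p) {u : ℕ → X → E} {u₀ : X → E} (hu : ∀ n, AEStronglyMeasurable (u n) μ)
    (hu₀ : AEStronglyMeasurable u₀ μ)
    (hlim : Tendsto (fun n ↦ ∫⁻ x, ‖u n x - u₀ x‖ₑ ^ p ∂μ) atTop (𝓝 0)) :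
    ∃ k : ℕ → ℕ, StrictMono k ∧
      ∀ᵐ x ∂μ, Tendsto (fun i ↦ u (k i) x) atTop (𝓝 (u₀ x)) := by
  have hp0 : ENNReal.ofReal p ≠ 0 := by simpa using hp
  have hnorm : Tendsto (fun n ↦ eLpNorm (u n - u₀) (ENNReal.ofReal p) μ) atTop (𝓝 0) := by
    simp only [eLpNorm_eq_lintegral_rpow_enorm_toReal hp0 ENNReal.ofReal_ne_top,
      ENNReal.toReal_ofReal hp.le, Pi.sub_apply]
    simpa only [ENNReal.zero_rpow_of_pos (one_div_pos.2 hp)] using hlim.ennrpow_const (1 / p)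
  exact (tendstoInMeasure_of_tendsto_eLpNorm hp0 hu hu₀ hnorm).exists_seq_tendsto_ae

end Lebesgue

section Integrand

variable {X E : Type*} [PseudoMetricSpace X] [NormedAddCommGroup E] {p a : ℝ}

/-- The integrand `‖w x - w y‖ ^ p / d(x, y) ^ a` of the Gagliardo seminorm, with values in
`ℝ≥0∞`. On an `m`-dimensional domain the fractional Sobolev space `W^{s,p}` corresponds to
`a = m + s p`. On the diagonal it is `0` for `0 < p`, because `0 / 0 = 0` in `ℝ≥0∞`. -/
noncomputable def gagliardoIntegrand (p a : ℝ) (w : X → E) (z : X × X) : ℝ≥0∞ :=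
  ‖w z.1 - w z.2‖ₑ ^ p / edist z.1 z.2 ^ a

/-- The pairs of points at distance less than `ρ`, on which the Gagliardo seminorm is localized. -/
def nearDiagonal (X : Type*) [PseudoMetricSpace X] (ρ : ℝ) : Set (X × X) :=
  {z | dist z.1 z.2 < ρ}

lemma gagliardoIntegrand_neg (w : X → E) :
    gagliardoIntegrand p a (-w) = gagliardoIntegrand p a w := by
  ext z
  simp only [gagliardoIntegrand, Pi.neg_apply, ← neg_sub', enorm_neg]

lemma gagliardoIntegrand_add_le (hp : 0 ≤ p) (f g : X → E) (z : X × X) :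
    gagliardoIntegrand p a (f + g) z
      ≤ 2 ^ p * (gagliardoIntegrand p a f z + gagliardoIntegrand p a g z) := by
  simp only [gagliardoIntegrand, Pi.add_apply, add_sub_add_comm]
  rw [← ENNReal.add_div, ← mul_div_assoc]
  gcongr
  calc ‖f z.1 - f z.2 + (g z.1 - g z.2)‖ₑ ^ p
      ≤ (‖f z.1 - f z.2‖ₑ + ‖g z.1 - g z.2‖ₑ) ^ p :=
        ENNReal.rpow_le_rpow (enorm_add_le _ _) hp
    _ ≤ 2 ^ p * (‖f z.1 - f z.2‖ₑ ^ p + ‖g z.1 - g z.2‖ₑ ^ p) :=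
        ENNReal.add_rpow_le_two_rpow_mul_rpow_add_rpow _ _ hp

lemma gagliardoIntegrand_le_of_notMem_nearDiagonal (hp : 0 ≤ p) (ha : 0 ≤ a) {ρ : ℝ} (w : X → E)
    {z : X × X} (hz : z ∉ nearDiagonal X ρ) :
    gagliardoIntegrand p a w z
      ≤ 2 ^ p / ENNReal.ofReal ρ ^ a * (‖w z.1‖ₑ ^ p + ‖w z.2‖ₑ ^ p) := by
  have hρ : ENNReal.ofReal ρ ≤ edist z.1 z.2 := by
    rw [edist_dist]
    exact ENNReal.ofReal_le_ofReal (not_lt.1 hz)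
  have hnum : ‖w z.1 - w z.2‖ₑ ^ p ≤ 2 ^ p * (‖w z.1‖ₑ ^ p + ‖w z.2‖ₑ ^ p) :=
    (ENNReal.rpow_le_rpow enorm_sub_le hp).trans
      (ENNReal.add_rpow_le_two_rpow_mul_rpow_add_rpow _ _ hp)
  calc gagliardoIntegrand p a w z
      ≤ 2 ^ p * (‖w z.1‖ₑ ^ p + ‖w z.2‖ₑ ^ p) / ENNReal.ofReal ρ ^ a :=
        ENNReal.div_le_div hnum (ENNReal.rpow_le_rpow hρ ha)
    _ = 2 ^ p / ENNReal.ofReal ρ ^ a * (‖w z.1‖ₑ ^ p + ‖w z.2‖ₑ ^ p) :=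
        ENNReal.mul_div_right_comm

lemma gagliardoIntegrand_of_fst_eq_snd (hp : 0 < p) (w : X → E) {z : X × X} (hz : z.1 = z.2) :
    gagliardoIntegrand p a w z = 0 := by
  simp only [gagliardoIntegrand, hz, sub_self, enorm_zero, ENNReal.zero_rpow_of_pos hp,
    ENNReal.zero_div]

end Integrand

section MetricIntegrand

variable {X E : Type*} [MetricSpace X] [NormedAddCommGroup E] {p a : ℝ}

lemma iInter_nearDiagonal : ⋂ ρ > 0, nearDiagonal X ρ = Set.diagonal X := by
  ext z
  simp only [nearDiagonal, gt_iff_lt, Set.mem_iInter, Set.mem_ofPred_eq, Set.mem_diagonal_iff]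
  exact ⟨fun h ↦ eq_of_forall_dist_le fun ρ hρ ↦ (h ρ hρ).le, fun h ρ hρ ↦ by simpa [h] using hρ⟩

lemma tendsto_gagliardoIntegrand (hp : 0 < p) {ι : Type*} {l : Filter ι} {u : ι → X → E}
    {u₀ : X → E} {z : X × X} (hfst : Tendsto (fun i ↦ u i z.1) l (𝓝 (u₀ z.1)))
    (hsnd : Tendsto (fun i ↦ u i z.2) l (𝓝 (u₀ z.2))) :
    Tendsto (fun i ↦ gagliardoIntegrand p a (u i) z) l (𝓝 (gagliardoIntegrand p a u₀ z)) := by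
  by_cases hz : z.1 = z.2
  · simp only [gagliardoIntegrand_of_fst_eq_snd hp _ hz, tendsto_const_nhds]
  · have hden : edist z.1 z.2 ^ a ≠ 0 :=
      (ENNReal.rpow_pos (edist_pos.2 hz) (edist_ne_top _ _)).ne'
    exact ENNReal.Tendsto.div_const ((hfst.sub hsnd).enorm.ennrpow_const p) (Or.inr hden)

lemma gagliardoIntegrand_eq_ofReal (hp : 0 < p) (w : X → E) (z : X × X) :
    gagliardoIntegrand p a w z
      = ENNReal.ofReal (‖w z.1 - w z.2‖ ^ p / dist z.1 z.2 ^ a) := by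
  by_cases hz : z.1 = z.2
  · rw [gagliardoIntegrand_of_fst_eq_snd hp w hz, hz, sub_self, norm_zero,
      Real.zero_rpow hp.ne', zero_div, ENNReal.ofReal_zero]
  · have hdist : 0 < dist z.1 z.2 := dist_pos.2 hz
    rw [gagliardoIntegrand, ENNReal.ofReal_div_of_pos (Real.rpow_pos_of_pos hdist a),
      ← ENNReal.ofReal_rpow_of_pos hdist, ← edist_dist, ofReal_norm_rpow hp.le]

end MetricIntegrand

section Energy

variable {X E : Type*} [PseudoMetricSpace X] [MeasurableSpace X] [NormedAddCommGroup E]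
  {p a : ℝ} {κ : Measure (X × X)}

/-- The `p`-th power of the Gagliardo seminorm, for a measure `κ` on pairs of points. The full
seminorm over a domain carrying the measure `μ` is the case `κ = μ.prod μ`, and its localization at
scale `ρ` is the restriction of that `κ` to `nearDiagonal X ρ`. -/
noncomputable def gagliardoEnergy (p a : ℝ) (w : X → E) (κ : Measure (X × X)) : ℝ≥0∞ :=
  ∫⁻ z, gagliardoIntegrand p a w z ∂κ

lemma gagliardoEnergy_add_le (hp : 0 ≤ p) {f : X → E}
    (hf : AEMeasurable (gagliardoIntegrand p a f) κ) (g : X → E) :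
    gagliardoEnergy p a (f + g) κ
      ≤ 2 ^ p * (gagliardoEnergy p a f κ + gagliardoEnergy p a g κ) := by
  have htop : (2 : ℝ≥0∞) ^ p ≠ ⊤ := ENNReal.rpow_ne_top_of_nonneg hp ENNReal.ofNat_ne_top
  simp only [gagliardoEnergy]
  rw [← lintegral_add_left' hf, ← lintegral_const_mul' _ _ htop]
  exact lintegral_mono fun z ↦ gagliardoIntegrand_add_le hp f g z

lemma gagliardoEnergy_sub_le (hp : 0 ≤ p) {f : X → E}
    (hf : AEMeasurable (gagliardoIntegrand p a f) κ) (g : X → E) :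
    gagliardoEnergy p a (f - g) κ
      ≤ 2 ^ p * (gagliardoEnergy p a f κ + gagliardoEnergy p a g κ) := by
  simpa only [sub_eq_add_neg, gagliardoEnergy, gagliardoIntegrand_neg]
    using gagliardoEnergy_add_le hp hf (-g)

lemma gagliardoEnergy_ne_top_of_sub (hp : 0 ≤ p) {f g : X → E}
    (hf : AEMeasurable (gagliardoIntegrand p a f) κ) (hf_top : gagliardoEnergy p a f κ ≠ ⊤)
    (hfg_top : gagliardoEnergy p a (f - g) κ ≠ ⊤) :
    gagliardoEnergy p a g κ ≠ ⊤ := by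
  have htop : (2 : ℝ≥0∞) ^ p ≠ ⊤ := ENNReal.rpow_ne_top_of_nonneg hp ENNReal.ofNat_ne_top
  have hle := gagliardoEnergy_sub_le hp hf (f - g)
  rw [sub_sub_cancel f g] at hle
  exact ne_top_of_le_ne_top (ENNReal.mul_ne_top htop (ENNReal.add_ne_top.2 ⟨hf_top, hfg_top⟩)) hle

lemma gagliardoEnergy_restrict_le (w : X → E) (s : Set (X × X)) :
    gagliardoEnergy p a w (κ.restrict s) ≤ gagliardoEnergy p a w κ :=
  setLIntegral_le_lintegral s _

variable [OpensMeasurableSpace X] [SecondCountableTopology X]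

lemma measurableSet_nearDiagonal (ρ : ℝ) : MeasurableSet (nearDiagonal X ρ) :=
  measurableSet_lt measurable_dist measurable_const

variable {μ : Measure X}

lemma aemeasurable_gagliardoIntegrand [SFinite μ] {w : X → E} (hw : AEStronglyMeasurable w μ) :
    AEMeasurable (gagliardoIntegrand p a w) (μ.prod μ) :=
  ((hw.comp_fst.sub hw.comp_snd).enorm.pow_const p).div (measurable_edist.pow_const a).aemeasurable

lemma gagliardoEnergy_restrict_compl_nearDiagonal_le [SFinite μ] (hp : 0 ≤ p) (ha : 0 ≤ a)
    (ρ : ℝ) {w : X → E} (hw : AEStronglyMeasurable w μ) :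
    gagliardoEnergy p a w ((μ.prod μ).restrict (nearDiagonal X ρ)ᶜ)
      ≤ 2 ^ p / ENNReal.ofReal ρ ^ a * (2 * μ Set.univ * ∫⁻ x, ‖w x‖ₑ ^ p ∂μ) := by
  have hpow : AEMeasurable (fun x ↦ ‖w x‖ₑ ^ p) μ := hw.enorm.pow_const p
  have hsum : AEMeasurable (fun z : X × X ↦ ‖w z.1‖ₑ ^ p + ‖w z.2‖ₑ ^ p) (μ.prod μ) :=
    hpow.comp_fst.add hpow.comp_snd
  calc gagliardoEnergy p a w ((μ.prod μ).restrict (nearDiagonal X ρ)ᶜ)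
      ≤ ∫⁻ z in (nearDiagonal X ρ)ᶜ,
          2 ^ p / ENNReal.ofReal ρ ^ a * (‖w z.1‖ₑ ^ p + ‖w z.2‖ₑ ^ p) ∂μ.prod μ :=
        setLIntegral_mono' (measurableSet_nearDiagonal ρ).compl fun z hz ↦
          gagliardoIntegrand_le_of_notMem_nearDiagonal hp ha w hz
    _ ≤ ∫⁻ z, 2 ^ p / ENNReal.ofReal ρ ^ a * (‖w z.1‖ₑ ^ p + ‖w z.2‖ₑ ^ p) ∂μ.prod μ :=
        setLIntegral_le_lintegral _ _
    _ = 2 ^ p / ENNReal.ofReal ρ ^ a * (2 * μ Set.univ * ∫⁻ x, ‖w x‖ₑ ^ p ∂μ) := by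
        rw [lintegral_const_mul'' _ hsum, lintegral_prod_fst_add_snd hpow]

end Energy

section Convergence

variable {X E : Type*} [MetricSpace X] [MeasurableSpace X] [OpensMeasurableSpace X]
  [SecondCountableTopology X] [NormedAddCommGroup E] {p a : ℝ} {μ : Measure X}

lemma tendsto_gagliardoEnergy_restrict_nearDiagonal (hp : 0 < p) {κ : Measure (X × X)}
    {w : X → E} (hw : gagliardoEnergy p a w κ ≠ ⊤) :
    Tendsto (fun ρ ↦ gagliardoEnergy p a w (κ.restrict (nearDiagonal X ρ))) (𝓝[>] 0) (𝓝 0) := by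
  -- Continuity from above of the finite measure with density the integrand, which does not charge
  -- the diagonal.
  have hfin : IsFiniteMeasure (κ.withDensity (gagliardoIntegrand p a w)) :=
    isFiniteMeasure_withDensity hw
  have hdiag : κ.withDensity (gagliardoIntegrand p a w) (Set.diagonal X) = 0 := by
    rw [withDensity_apply _ measurableSet_diagonal]
    exact setLIntegral_eq_zero measurableSet_diagonal fun z hz ↦
      gagliardoIntegrand_of_fst_eq_snd hp w hz
  have hcont := tendsto_measure_biInter_gt (μ := κ.withDensity (gagliardoIntegrand p a w))
    (s := nearDiagonal X) (a := 0) (fun ρ _ ↦ (measurableSet_nearDiagonal ρ).nullMeasurableSet)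
    (fun _ _ _ hle _ hz ↦ lt_of_lt_of_le hz hle) ⟨1, one_pos, measure_ne_top _ _⟩
  rw [iInter_nearDiagonal, hdiag] at hcont
  exact hcont.congr fun ρ ↦ withDensity_apply _ (measurableSet_nearDiagonal ρ)

variable {u : ℕ → X → E} {u₀ : X → E}

lemma gagliardoEnergy_le_iSup [SFinite μ] (hp : 0 < p)
    (hu : ∀ n, AEStronglyMeasurable (u n) μ) (hu₀ : AEStronglyMeasurable u₀ μ)
    (hlim : Tendsto (fun n ↦ ∫⁻ x, ‖u n x - u₀ x‖ₑ ^ p ∂μ) atTop (𝓝 0))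
    {κ : Measure (X × X)} (hκ : κ ≪ μ.prod μ) :
    gagliardoEnergy p a u₀ κ ≤ ⨆ n, gagliardoEnergy p a (u n) κ := by
  obtain ⟨k, -, hk⟩ := exists_seq_tendsto_ae_of_tendsto_lintegral_enorm_rpow hp hu hu₀ hlim
  have hpointwise : ∀ᵐ z ∂κ,
      gagliardoIntegrand p a u₀ z = liminf (fun i ↦ gagliardoIntegrand p a (u (k i)) z) atTop := by
    filter_upwards [hκ.ae_le (Measure.quasiMeasurePreserving_fst.ae hk),
      hκ.ae_le (Measure.quasiMeasurePreserving_snd.ae hk)] with z hfst hsnd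
    exact (tendsto_gagliardoIntegrand hp hfst hsnd).liminf_eq.symm
  calc gagliardoEnergy p a u₀ κ
      = ∫⁻ z, liminf (fun i ↦ gagliardoIntegrand p a (u (k i)) z) atTop ∂κ :=
        lintegral_congr_ae hpointwise
    _ ≤ liminf (fun i ↦ gagliardoEnergy p a (u (k i)) κ) atTop :=
        lintegral_liminf_le' fun i ↦ (aemeasurable_gagliardoIntegrand (hu (k i))).mono_ac hκ
    _ ≤ ⨆ n, gagliardoEnergy p a (u n) κ :=
        liminf_le_of_frequently_le' <| Frequently.of_forall fun i ↦
          le_iSup (fun n ↦ gagliardoEnergy p a (u n) κ) (k i)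

lemma tendsto_iSup_gagliardoEnergy_nearDiagonal [SFinite μ] (hp : 0 < p)
    (hu : ∀ n, AEStronglyMeasurable (u n) μ) (hu₀ : AEStronglyMeasurable u₀ μ)
    (hfin : ∀ n, gagliardoEnergy p a (u n) (μ.prod μ) ≠ ⊤)
    (hlim : Tendsto (fun n ↦ gagliardoEnergy p a (u n - u₀) (μ.prod μ)) atTop (𝓝 0)) :
    Tendsto (fun ρ ↦ ⨆ n, gagliardoEnergy p a (u n) ((μ.prod μ).restrict (nearDiagonal X ρ)))
      (𝓝[>] 0) (𝓝 0) := by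
  have htop : (2 : ℝ≥0∞) ^ p ≠ ⊤ := ENNReal.rpow_ne_top_of_nonneg hp.le ENNReal.ofNat_ne_top
  have hfin₀ : gagliardoEnergy p a u₀ (μ.prod μ) ≠ ⊤ := by
    obtain ⟨n, hn⟩ := (hlim.eventually (gt_mem_nhds one_pos)).exists
    exact gagliardoEnergy_ne_top_of_sub hp.le (aemeasurable_gagliardoIntegrand (hu n)) (hfin n)
      hn.ne_top
  refine tendsto_iSup_nhds_zero_of_le_add
    (b := fun n ↦ 2 ^ p * gagliardoEnergy p a (u n - u₀) (μ.prod μ))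
    (c := fun ρ ↦ 2 ^ p * gagliardoEnergy p a u₀ ((μ.prod μ).restrict (nearDiagonal X ρ)))
    (fun n ρ ↦ ?_) ?_ ?_ fun n ↦ tendsto_gagliardoEnergy_restrict_nearDiagonal hp (hfin n)
  · have hle := gagliardoEnergy_add_le (a := a) hp.le
      (aemeasurable_gagliardoIntegrand ((hu n).sub hu₀)).restrict u₀
      (κ := (μ.prod μ).restrict (nearDiagonal X ρ))
    rw [sub_add_cancel, mul_add] at hle
    exact hle.trans (by gcongr; exact gagliardoEnergy_restrict_le _ _)
  · simpa only [mul_zero] using ENNReal.Tendsto.const_mul hlim (Or.inr htop)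
  · simpa only [mul_zero] using ENNReal.Tendsto.const_mul
      (tendsto_gagliardoEnergy_restrict_nearDiagonal hp hfin₀) (Or.inr htop)

lemma tendsto_gagliardoEnergy_sub [IsFiniteMeasure μ] (hp : 0 < p) (ha : 0 ≤ a)
    (hu : ∀ n, AEStronglyMeasurable (u n) μ) (hu₀ : AEStronglyMeasurable u₀ μ)
    (hlim : Tendsto (fun n ↦ ∫⁻ x, ‖u n x - u₀ x‖ₑ ^ p ∂μ) atTop (𝓝 0))
    (hnear : Tendsto
      (fun ρ ↦ ⨆ n, gagliardoEnergy p a (u n) ((μ.prod μ).restrict (nearDiagonal X ρ)))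
      (𝓝[>] 0) (𝓝 0)) :
    Tendsto (fun n ↦ gagliardoEnergy p a (u n - u₀) (μ.prod μ)) atTop (𝓝 0) := by
  have htop : (2 : ℝ≥0∞) ^ p ≠ ⊤ := ENNReal.rpow_ne_top_of_nonneg hp.le ENNReal.ofNat_ne_top
  set S : ℝ → ℝ≥0∞ :=
    fun ρ ↦ ⨆ n, gagliardoEnergy p a (u n) ((μ.prod μ).restrict (nearDiagonal X ρ))
  have hnear_le (ρ : ℝ) (n : ℕ) :
      gagliardoEnergy p a (u n - u₀) ((μ.prod μ).restrict (nearDiagonal X ρ))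
        ≤ 2 ^ p * (S ρ + S ρ) := by
    refine (gagliardoEnergy_sub_le hp.le
      (aemeasurable_gagliardoIntegrand (hu n)).restrict u₀).trans ?_
    gcongr
    · exact le_iSup (fun n ↦ gagliardoEnergy p a (u n) ((μ.prod μ).restrict (nearDiagonal X ρ))) n
    · exact gagliardoEnergy_le_iSup hp hu hu₀ hlim Measure.restrict_le_self.absolutelyContinuous
  refine tendsto_nhds_zero_of_le_add (l := 𝓝[>] 0) (c := fun ρ ↦ 2 ^ p * (S ρ + S ρ))
    (b := fun ρ n ↦ 2 ^ p / ENNReal.ofReal ρ ^ a *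
      (2 * μ Set.univ * ∫⁻ x, ‖u n x - u₀ x‖ₑ ^ p ∂μ)) (fun ρ n ↦ ?_) ?_ ?_
  · rw [gagliardoEnergy, ← lintegral_add_compl _ (measurableSet_nearDiagonal ρ)]
    exact add_le_add (hnear_le ρ n)
      (gagliardoEnergy_restrict_compl_nearDiagonal_le hp.le ha ρ ((hu n).sub hu₀))
  · simpa only [add_zero, mul_zero] using ENNReal.Tendsto.const_mul (hnear.add hnear) (Or.inr htop)
  · filter_upwards [self_mem_nhdsWithin] with ρ hρ
    have hkernel : (2 : ℝ≥0∞) ^ p / ENNReal.ofReal ρ ^ a ≠ ⊤ := ENNReal.div_ne_top htop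
      (ENNReal.rpow_pos (ENNReal.ofReal_pos.2 hρ) ENNReal.ofReal_ne_top).ne'
    have hmass : 2 * μ Set.univ ≠ ⊤ := ENNReal.mul_ne_top ENNReal.ofNat_ne_top (measure_ne_top _ _)
    simpa only [mul_zero] using ENNReal.Tendsto.const_mul
      (ENNReal.Tendsto.const_mul hlim (Or.inr hmass)) (Or.inr hkernel)

theorem fractional_strong_iff_equiintegrable_general [IsFiniteMeasure μ] (hp : 0 < p) (ha : 0 ≤ a)
    (hu : ∀ n, AEStronglyMeasurable (u n) μ)
    (hfin : ∀ n, gagliardoEnergy p a (u n) (μ.prod μ) ≠ ⊤) (hu₀ : AEStronglyMeasurable u₀ μ) :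
    (Tendsto (fun n ↦ ∫⁻ x, ‖u n x - u₀ x‖ₑ ^ p ∂μ) atTop (𝓝 0) ∧
      Tendsto (fun n ↦ gagliardoEnergy p a (u n - u₀) (μ.prod μ)) atTop (𝓝 0))
    ↔
    (Tendsto (fun n ↦ ∫⁻ x, ‖u n x - u₀ x‖ₑ ^ p ∂μ) atTop (𝓝 0) ∧
      Tendsto (fun ρ ↦ ⨆ n, gagliardoEnergy p a (u n) ((μ.prod μ).restrict (nearDiagonal X ρ)))
        (𝓝[>] 0) (𝓝 0)) :=
  and_congr_right fun hlim ↦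
    ⟨tendsto_iSup_gagliardoEnergy_nearDiagonal hp hu hu₀ hfin,
      tendsto_gagliardoEnergy_sub hp ha hu hu₀ hlim⟩

end Convergence

section Domain

variable {V E : Type*} [NormedAddCommGroup V] [MeasureSpace V] [SFinite (volume : Measure V)]
  [NormedAddCommGroup E] {p a : ℝ} {Ω : Set V}

lemma gagliardoEnergy_restrict_prod_restrict (hp : 0 < p) (w : V → E) :
    gagliardoEnergy p a w ((volume.restrict Ω).prod (volume.restrict Ω))
      = ∫⁻ z in Ω ×ˢ Ω, ENNReal.ofReal (‖w z.1 - w z.2‖ ^ p / ‖z.1 - z.2‖ ^ a) := by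
  simp only [gagliardoEnergy, gagliardoIntegrand_eq_ofReal hp, Measure.prod_restrict,
    ← Measure.volume_eq_prod, dist_eq_norm]

lemma gagliardoEnergy_restrict_prod_restrict_nearDiagonal [OpensMeasurableSpace V]
    [SecondCountableTopology V] (hp : 0 < p) (w : V → E) (ρ : ℝ) :
    gagliardoEnergy p a w
        (((volume.restrict Ω).prod (volume.restrict Ω)).restrict (nearDiagonal V ρ))
      = ∫⁻ z in {z : V × V | z.1 ∈ Ω ∧ z.2 ∈ Ω ∧ ‖z.1 - z.2‖ < ρ},
          ENNReal.ofReal (‖w z.1 - w z.2‖ ^ p / ‖z.1 - z.2‖ ^ a) := by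
  have hset : nearDiagonal V ρ ∩ Ω ×ˢ Ω = {z | z.1 ∈ Ω ∧ z.2 ∈ Ω ∧ ‖z.1 - z.2‖ < ρ} := by
    ext z
    simp only [nearDiagonal, dist_eq_norm, Set.mem_inter_iff, Set.mem_ofPred_eq, Set.mem_prod]
    tauto
  simp only [gagliardoEnergy, gagliardoIntegrand_eq_ofReal hp, Measure.prod_restrict,
    ← Measure.volume_eq_prod, dist_eq_norm,
    Measure.restrict_restrict (measurableSet_nearDiagonal ρ), hset]

end Domain

/-- Equivalence between strong convergence in the fractional Sobolev space
`W^{s,p}` (0 < s < 1) and `L^p` convergence together with uniform vanishing of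
the Gagliardo seminorm localized at small scales (Proposition 4.1, case
0 < s < 1). -/
theorem fractional_strong_iff_equiintegrable
    (m ν : ℕ) (hm : 1 ≤ m) (hν : 1 ≤ ν)
    (s : ℝ) (hs : s ∈ Set.Ioo (0:ℝ) 1) (p : ℝ) (hp : 1 ≤ p)
    (Ω : Set (EuclideanSpace ℝ (Fin m))) (hne : Ω.Nonempty)
    (hbd : Bornology.IsBounded Ω) (hcx : Convex ℝ Ω) (hop : IsOpen Ω)
    (u : ℕ → EuclideanSpace ℝ (Fin m) → EuclideanSpace ℝ (Fin ν))
    (hum : ∀ n, Measurable (u n))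
    (hLp : ∀ n, (∫⁻ x in Ω, ENNReal.ofReal (‖u n x‖ ^ p)) < ⊤)
    (hGag : ∀ n, (∫⁻ z in Ω ×ˢ Ω,
      ENNReal.ofReal (‖u n z.1 - u n z.2‖ ^ p / ‖z.1 - z.2‖ ^ ((m : ℝ) + s * p))) < ⊤)
    (u₀ : EuclideanSpace ℝ (Fin m) → EuclideanSpace ℝ (Fin ν))
    (hu₀ : Measurable u₀) :
    ((Tendsto (fun n => ∫⁻ x in Ω, ENNReal.ofReal (‖u n x - u₀ x‖ ^ p))
        atTop (𝓝 0)) ∧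
      Tendsto (fun n => ∫⁻ z in Ω ×ˢ Ω,
          ENNReal.ofReal
            (‖(u n z.1 - u₀ z.1) - (u n z.2 - u₀ z.2)‖ ^ p
              / ‖z.1 - z.2‖ ^ ((m : ℝ) + s * p)))
        atTop (𝓝 0))
    ↔
    ((Tendsto (fun n => ∫⁻ x in Ω, ENNReal.ofReal (‖u n x - u₀ x‖ ^ p))
        atTop (𝓝 0)) ∧
      Tendsto (fun ρ : ℝ => ⨆ n,
          ∫⁻ z in {z : EuclideanSpace ℝ (Fin m) × EuclideanSpace ℝ (Fin m) |
              z.1 ∈ Ω ∧ z.2 ∈ Ω ∧ ‖z.1 - z.2‖ < ρ},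
            ENNReal.ofReal
              (‖u n z.1 - u n z.2‖ ^ p / ‖z.1 - z.2‖ ^ ((m : ℝ) + s * p)))
        (𝓝[>] 0) (𝓝 0)) := by
  have hp₀ : 0 < p := one_pos.trans_le hp
  have ha : 0 ≤ (m : ℝ) + s * p := add_nonneg m.cast_nonneg (mul_pos hs.1 hp₀).le
  have hfin : IsFiniteMeasure (volume.restrict Ω) :=
    isFiniteMeasure_restrict.2 hbd.measure_lt_top.ne
  simp only [← gagliardoEnergy_restrict_prod_restrict hp₀] at hGag
  simpa only [gagliardoEnergy_restrict_prod_restrict hp₀,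
    gagliardoEnergy_restrict_prod_restrict_nearDiagonal hp₀, ofReal_norm_rpow hp₀.le,
    Pi.sub_apply] using
    fractional_strong_iff_equiintegrable_general hp₀ ha (fun n ↦ (hum n).aestronglyMeasurable)
      (fun n ↦ (hGag n).ne) hu₀.aestronglyMeasurable
end

section
/- For every integer p ≥ 1 there exists a constant C > 0 such that for every integer ν ≥ 1, every x₀ ∈ ℝ^p, all real numbers r, ρ with 0 < r ≤ ρ, every η > 0, and every continuously differentiable map u : B_r(x₀) → ℝ^ν (where B_r(x₀) ⊆ ℝ^p is the open ball) whose derivative is integrable on B_r(x₀), one has λ(B_r(x₀))^{-2} ∬_{B_r(x₀)×B_r(x₀)} ‖u(y) − u(z)‖ dy dz ≤ C ( ( ∫_{B_r(x₀)} (‖Du‖ − η/ρ)_+^p )^{1/p} + η ), where λ is Lebesgue measure on ℝ^p. -/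
open MeasureTheory Filter Topology ENNReal

/-!
On a convex set `s`, `u y - u z` is bounded by `‖y - z‖` times the integral of `‖Du‖` along the
segment from `y` to `z`. Averaging over `(y, z) ∈ s × s`, at time `t` one of the two variables
carries a weight at least `1 / 2` in `(1 - t) • y + t • z`; integrating in that variable first
costs a Jacobian of at most `2 ^ n` and yields an `L¹` Poincaré inequality. On a ball of radius
`r` in dimension `n`, splitting `‖Du‖ ≤ (‖Du‖ - η / ρ)₊ + η / ρ` and applying Hölder's inequality
with exponent `n` makes the estimate scale invariant, since `r` is comparable to the `n`-th root
of the volume of the ball.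
-/

open Metric Set
open Module (finrank)

section LIntegral

variable {α : Type*} [MeasurableSpace α] {μ : Measure α}

lemma lintegral_le_lintegral_rpow_mul_measure_univ_rpow {f : α → ℝ≥0∞} (hf : AEMeasurable f μ)
    {p : ℝ} (hp : 1 ≤ p) :
    ∫⁻ x, f x ∂μ ≤ (∫⁻ x, f x ^ p ∂μ) ^ (1 / p) * μ univ ^ (1 - 1 / p) := by
  simpa [eLpNorm'] using
    eLpNorm'_le_eLpNorm'_mul_rpow_measure_univ one_pos hp hf.aestronglyMeasurable

lemma lintegral_enorm_le_lintegral_truncation_add {G : Type*} [SeminormedAddGroup G]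
    (g : α → G) (c : ℝ) :
    ∫⁻ x, ‖g x‖ₑ ∂μ ≤
      ∫⁻ x, ENNReal.ofReal (max (‖g x‖ - c) 0) ∂μ + ENNReal.ofReal c * μ univ := by
  rw [← lintegral_const, ← lintegral_add_right _ measurable_const]
  refine lintegral_mono fun x => ?_
  calc ‖g x‖ₑ = ENNReal.ofReal ‖g x‖ := (ofReal_norm _).symm
    _ ≤ ENNReal.ofReal (max (‖g x‖ - c) 0 + c) :=
        ENNReal.ofReal_le_ofReal (by linarith [le_max_left (‖g x‖ - c) 0])
    _ ≤ ENNReal.ofReal (max (‖g x‖ - c) 0) + ENNReal.ofReal c := ENNReal.ofReal_add_le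

end LIntegral

section Poincare

variable {E : Type*} [NormedAddCommGroup E] [NormedSpace ℝ E]
variable {F : Type*} [NormedAddCommGroup F] [NormedSpace ℝ F]

lemma enorm_sub_le_mul_lintegral_enorm_fderivWithin {s : Set E} (hs : Convex ℝ s) {u : E → F}
    (hu : ContDiffOn ℝ 1 u s) {y z : E} (hy : y ∈ s) (hz : z ∈ s) :
    ‖u y - u z‖ₑ ≤
      ‖y - z‖ₑ * ∫⁻ t in Icc (0 : ℝ) 1, ‖fderivWithin ℝ u s ((1 - t) • y + t • z)‖ₑ := by
  set γ : ℝ → E := fun t => (1 - t) • y + t • z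
  have hγ_mem : MapsTo γ (Icc 0 1) s := fun t ht =>
    hs hy hz (sub_nonneg.2 ht.2) ht.1 (sub_add_cancel 1 t)
  have hγ_deriv (t : ℝ) : HasDerivAt γ (z - y) t := by
    have h := ((hasDerivAt_id t).const_sub 1).smul_const y |>.add
      ((hasDerivAt_id t).smul_const z)
    simpa [γ, Pi.add_def, neg_add_eq_sub] using h
  have huγ_deriv (t : ℝ) (ht : t ∈ Icc (0 : ℝ) 1) :
      derivWithin (u ∘ γ) (Icc 0 1) t = fderivWithin ℝ u s (γ t) (z - y) :=
    ((hu.differentiableOn one_ne_zero _ (hγ_mem ht)).hasFDerivWithinAt.comp_hasDerivWithinAt t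
      (hγ_deriv t).hasDerivWithinAt hγ_mem).derivWithin (uniqueDiffOn_Icc_zero_one t ht)
  have huγ : ContDiffOn ℝ 1 (u ∘ γ) (Icc 0 1) := hu.comp (by fun_prop) hγ_mem
  calc ‖u y - u z‖ₑ = ‖(u ∘ γ) 1 - (u ∘ γ) 0‖ₑ := by simp [γ, enorm_sub_rev]
    _ ≤ ∫⁻ t in Icc (0 : ℝ) 1, ‖derivWithin (u ∘ γ) (Icc 0 1) t‖ₑ :=
        enorm_sub_le_lintegral_derivWithin_Icc_of_contDiffOn_Icc huγ zero_le_one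
    _ ≤ ∫⁻ t in Icc (0 : ℝ) 1, ‖y - z‖ₑ * ‖fderivWithin ℝ u s (γ t)‖ₑ := by
        refine setLIntegral_mono' measurableSet_Icc fun t ht => ?_
        rw [huγ_deriv t ht, mul_comm, ← enorm_neg (y - z), neg_sub]
        exact ContinuousLinearMap.le_opENorm _ _
    _ = _ := lintegral_const_mul' _ _ enorm_ne_top

variable [FiniteDimensional ℝ E] [MeasurableSpace E] [BorelSpace E]
  (μ : Measure E) [μ.IsAddHaarMeasure]

lemma lintegral_comp_add_smul (f : E → ℝ≥0∞) {t : ℝ} (ht : t ≠ 0) (c : E) :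
    ∫⁻ y, f (c + t • y) ∂μ = ENNReal.ofReal |(t ^ finrank ℝ E)⁻¹| * ∫⁻ y, f y ∂μ := by
  have h_emb : MeasurableEmbedding fun y : E => t • y :=
    (Homeomorph.smulOfNeZero t ht).measurableEmbedding
  rw [← h_emb.lintegral_map (fun y => f (c + y)), Measure.map_addHaar_smul μ ht,
    lintegral_smul_measure, lintegral_add_left_eq_self, smul_eq_mul]

lemma lintegral_comp_add_smul_le (f : E → ℝ≥0∞) {t : ℝ} (ht : 1 / 2 ≤ t) (c : E) :
    ∫⁻ y, f (c + t • y) ∂μ ≤ 2 ^ finrank ℝ E * ∫⁻ y, f y ∂μ := by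
  have ht_pos : 0 < t := by linarith
  have h_inv : t⁻¹ ≤ 2 := by rw [inv_le_comm₀ ht_pos two_pos]; linarith
  have h_jacobian : ENNReal.ofReal |(t ^ finrank ℝ E)⁻¹| ≤ 2 ^ finrank ℝ E := by
    rw [abs_of_pos (by positivity), ← inv_pow, ENNReal.ofReal_pow (by positivity)]
    gcongr
    exact ENNReal.ofReal_le_of_le_toReal (by simpa using h_inv)
  rw [lintegral_comp_add_smul μ f ht_pos.ne' c]
  gcongr

lemma setLIntegral_prod_comp_segment_le (f : E → ℝ≥0∞) (s : Set E) (t : ℝ) :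
    ∫⁻ q in s ×ˢ s, f ((1 - t) • q.1 + t • q.2) ∂(μ.prod μ) ≤
      2 ^ finrank ℝ E * μ s * ∫⁻ x, f x ∂μ := by
  rw [← Measure.prod_restrict]
  wlog ht : 1 / 2 ≤ t generalizing t
  · have h := this (1 - t) (by linarith)
    rw [← lintegral_prod_swap] at h
    simpa [add_comm] using h
  calc _ ≤ ∫⁻ y in s, ∫⁻ z in s, f ((1 - t) • y + t • z) ∂μ ∂μ := lintegral_prod_le _
    _ ≤ ∫⁻ _ in s, 2 ^ finrank ℝ E * ∫⁻ x, f x ∂μ ∂μ :=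
        lintegral_mono fun y => (setLIntegral_le_lintegral _ _).trans
          (lintegral_comp_add_smul_le μ f ht _)
    _ = _ := by rw [setLIntegral_const]; ring

lemma setLIntegral_prod_lintegral_segment_le {f : E → ℝ≥0∞} (hf : Measurable f) (s : Set E) :
    ∫⁻ q in s ×ˢ s, (∫⁻ t in Icc (0 : ℝ) 1, f ((1 - t) • q.1 + t • q.2)) ∂(μ.prod μ) ≤
      2 ^ finrank ℝ E * μ s * ∫⁻ x, f x ∂μ := by
  have h_meas : Measurable fun w : (E × E) × ℝ => f ((1 - w.2) • w.1.1 + w.2 • w.1.2) := by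
    fun_prop
  rw [lintegral_lintegral_swap h_meas.aemeasurable]
  calc _ ≤ ∫⁻ _ in Icc (0 : ℝ) 1, 2 ^ finrank ℝ E * μ s * ∫⁻ x, f x ∂μ :=
        lintegral_mono fun t => setLIntegral_prod_comp_segment_le μ f s t
    _ = _ := by simp

theorem setLIntegral_prod_enorm_sub_le_of_convex {s : Set E} (hs : Convex ℝ s)
    (hs_meas : MeasurableSet s) (hs_diff : UniqueDiffOn ℝ s) {u : E → F}
    (hu : ContDiffOn ℝ 1 u s) :
    ∫⁻ q in s ×ˢ s, ‖u q.1 - u q.2‖ₑ ∂(μ.prod μ) ≤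
      ediam s * (2 ^ finrank ℝ E * μ s * ∫⁻ x in s, ‖fderivWithin ℝ u s x‖ₑ ∂μ) := by
  classical
  set f : E → ℝ≥0∞ := s.indicator fun x => ‖fderivWithin ℝ u s x‖ₑ with hf_def
  have hf : Measurable f := by
    rw [hf_def, ← piecewise_eq_indicator]
    exact (hu.continuousOn_fderivWithin hs_diff le_rfl).enorm.measurable_piecewise
      continuousOn_const hs_meas
  have h_meas : Measurable fun w : (E × E) × ℝ => f ((1 - w.2) • w.1.1 + w.2 • w.1.2) := by
    fun_prop
  have h_segment : ∀ q ∈ s ×ˢ s, ‖u q.1 - u q.2‖ₑ ≤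
      ediam s * ∫⁻ t in Icc (0 : ℝ) 1, f ((1 - t) • q.1 + t • q.2) := by
    rintro ⟨y, z⟩ ⟨hy, hz⟩
    refine (enorm_sub_le_mul_lintegral_enorm_fderivWithin hs hu hy hz).trans ?_
    gcongr ?_ * ?_
    · exact edist_eq_enorm_sub y z ▸ edist_le_ediam_of_mem hy hz
    · refine setLIntegral_mono' measurableSet_Icc fun t ht => ?_
      have h_mem : (1 - t) • y + t • z ∈ s :=
        hs hy hz (sub_nonneg.2 ht.2) ht.1 (sub_add_cancel 1 t)
      rw [hf_def, indicator_of_mem h_mem]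
  calc _ ≤ ∫⁻ q in s ×ˢ s,
          ediam s * (∫⁻ t in Icc (0 : ℝ) 1, f ((1 - t) • q.1 + t • q.2)) ∂(μ.prod μ) :=
        setLIntegral_mono' (hs_meas.prod hs_meas) h_segment
    _ = ediam s * ∫⁻ q in s ×ˢ s,
          (∫⁻ t in Icc (0 : ℝ) 1, f ((1 - t) • q.1 + t • q.2)) ∂(μ.prod μ) :=
        lintegral_const_mul _ h_meas.lintegral_prod_right'
    _ ≤ ediam s * (2 ^ finrank ℝ E * μ s * ∫⁻ x, f x ∂μ) := by
        gcongr
        exact setLIntegral_prod_lintegral_segment_le μ hf s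
    _ = _ := by rw [lintegral_indicator hs_meas]

variable [Nontrivial E]

lemma measure_ball_rpow_inv_finrank (x : E) {r : ℝ} (hr : 0 ≤ r) :
    μ (ball x r) ^ (1 / (finrank ℝ E : ℝ)) =
      ENNReal.ofReal r * μ (ball 0 1) ^ (1 / (finrank ℝ E : ℝ)) := by
  have h_dim : (finrank ℝ E : ℝ) ≠ 0 := by exact_mod_cast Module.finrank_pos.ne'
  rw [Measure.addHaar_ball μ x hr, ENNReal.mul_rpow_of_nonneg _ _ (by positivity),
    ENNReal.ofReal_pow hr, ← ENNReal.rpow_natCast, ← ENNReal.rpow_mul,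
    mul_one_div_cancel h_dim, ENNReal.rpow_one]

lemma ofReal_mul_setLIntegral_ball_le {x : E} {r : ℝ} (hr : 0 < r) {f : E → ℝ≥0∞}
    (hf : AEMeasurable f (μ.restrict (ball x r))) :
    ENNReal.ofReal r * ∫⁻ y in ball x r, f y ∂μ ≤
      (μ (ball 0 1) ^ (1 / (finrank ℝ E : ℝ)))⁻¹ * μ (ball x r) *
        (∫⁻ y in ball x r, f y ^ finrank ℝ E ∂μ) ^ (1 / (finrank ℝ E : ℝ)) := by
  set n : ℝ := (finrank ℝ E : ℝ) with hn
  set κ := μ (ball (0 : E) 1) ^ (1 / n)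
  set V := μ (ball x r)
  set I := ∫⁻ y in ball x r, f y ^ finrank ℝ E ∂μ
  have hn_one : 1 ≤ n := Nat.one_le_cast.2 Module.finrank_pos
  have hκ_zero : κ ≠ 0 :=
    (ENNReal.rpow_pos (measure_ball_pos μ _ one_pos) measure_ball_lt_top.ne).ne'
  have hκ_top : κ ≠ ∞ := ENNReal.rpow_ne_top_of_nonneg (by positivity) measure_ball_lt_top.ne
  have h_radius : ENNReal.ofReal r = κ⁻¹ * V ^ (1 / n) := by
    rw [measure_ball_rpow_inv_finrank μ x hr.le, mul_left_comm,
      ENNReal.inv_mul_cancel hκ_zero hκ_top, mul_one]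
  have h_volume : V ^ (1 / n) * V ^ (1 - 1 / n) = V := by
    rw [← ENNReal.rpow_add _ _ (measure_ball_pos μ x hr).ne' measure_ball_lt_top.ne,
      add_sub_cancel, ENNReal.rpow_one]
  have h_holder : ∫⁻ y in ball x r, f y ∂μ ≤ I ^ (1 / n) * V ^ (1 - 1 / n) := by
    simpa [hn, V, I] using lintegral_le_lintegral_rpow_mul_measure_univ_rpow hf hn_one
  calc _ ≤ κ⁻¹ * V ^ (1 / n) * (I ^ (1 / n) * V ^ (1 - 1 / n)) := by
        rw [h_radius]
        gcongr
    _ = κ⁻¹ * (V ^ (1 / n) * V ^ (1 - 1 / n)) * I ^ (1 / n) := by ring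
    _ = _ := by rw [h_volume]

lemma ofReal_mul_setLIntegral_ball_enorm_le_truncation {G : Type*} [SeminormedAddCommGroup G]
    {x₀ : E} {r ρ η : ℝ} (hr : 0 < r) (hrρ : r ≤ ρ) (hη : 0 ≤ η) {g : E → G}
    (hg : AEStronglyMeasurable g (μ.restrict (ball x₀ r))) :
    ENNReal.ofReal r * ∫⁻ x in ball x₀ r, ‖g x‖ₑ ∂μ ≤
      μ (ball x₀ r) * ((μ (ball 0 1) ^ (1 / (finrank ℝ E : ℝ)))⁻¹ *
          (∫⁻ x in ball x₀ r, ENNReal.ofReal (max (‖g x‖ - η / ρ) 0 ^ finrank ℝ E) ∂μ)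
            ^ (1 / (finrank ℝ E : ℝ))
        + ENNReal.ofReal η) := by
  set B := ball x₀ r
  set κ := (μ (ball (0 : E) 1) ^ (1 / (finrank ℝ E : ℝ)))⁻¹
  set T : E → ℝ := fun x => max (‖g x‖ - η / ρ) 0
  set I := ∫⁻ x in B, ENNReal.ofReal (T x ^ finrank ℝ E) ∂μ
  have hT_nonneg (x : E) : 0 ≤ T x := le_max_right _ _
  have hT_meas : AEMeasurable T (μ.restrict B) :=
    (hg.norm.aemeasurable.sub_const _).max aemeasurable_const
  have h_holder : ENNReal.ofReal r * ∫⁻ x in B, ENNReal.ofReal (T x) ∂μ ≤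
      κ * μ B * I ^ (1 / (finrank ℝ E : ℝ)) := by
    simpa only [I, fun x => ENNReal.ofReal_pow (hT_nonneg x) (finrank ℝ E)] using
      ofReal_mul_setLIntegral_ball_le μ hr hT_meas.ennreal_ofReal
  have h_level : ENNReal.ofReal r * ENNReal.ofReal (η / ρ) ≤ ENNReal.ofReal η := by
    rw [← ENNReal.ofReal_mul hr.le, mul_div_left_comm]
    exact ENNReal.ofReal_le_ofReal
      (mul_le_of_le_one_right hη (div_le_one_of_le₀ hrρ (hr.le.trans hrρ)))
  calc _ ≤ ENNReal.ofReal r *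
          (∫⁻ x in B, ENNReal.ofReal (T x) ∂μ + ENNReal.ofReal (η / ρ) * μ B) := by
        gcongr
        simpa only [Measure.restrict_apply_univ] using
          lintegral_enorm_le_lintegral_truncation_add (μ := μ.restrict B) g (η / ρ)
    _ = ENNReal.ofReal r * ∫⁻ x in B, ENNReal.ofReal (T x) ∂μ +
          ENNReal.ofReal r * ENNReal.ofReal (η / ρ) * μ B := by ring
    _ ≤ κ * μ B * I ^ (1 / (finrank ℝ E : ℝ)) + ENNReal.ofReal η * μ B := by gcongr
    _ = _ := by ring

theorem setLIntegral_ball_prod_enorm_sub_le {x₀ : E} {r ρ η : ℝ} (hr : 0 < r) (hrρ : r ≤ ρ)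
    (hη : 0 ≤ η) {u : E → F} (hu : ContDiffOn ℝ 1 u (ball x₀ r)) :
    ∫⁻ q in ball x₀ r ×ˢ ball x₀ r, ‖u q.1 - u q.2‖ₑ ∂(μ.prod μ) ≤
      μ (ball x₀ r) ^ 2 *
        (2 ^ (finrank ℝ E + 1) * ((μ (ball 0 1) ^ (1 / (finrank ℝ E : ℝ)))⁻¹ + 1) *
          ((∫⁻ x in ball x₀ r,
              ENNReal.ofReal (max (‖fderivWithin ℝ u (ball x₀ r) x‖ - η / ρ) 0 ^ finrank ℝ E) ∂μ)
              ^ (1 / (finrank ℝ E : ℝ))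
            + ENNReal.ofReal η)) := by
  have h_diff : UniqueDiffOn ℝ (ball x₀ r) := isOpen_ball.uniqueDiffOn
  have h_ediam : ediam (ball x₀ r) ≤ 2 * ENNReal.ofReal r := eball_ofReal (x := x₀) ▸ ediam_eball_le
  have h_truncation := ofReal_mul_setLIntegral_ball_enorm_le_truncation μ hr hrρ hη
    ((hu.continuousOn_fderivWithin h_diff le_rfl).aestronglyMeasurable measurableSet_ball)
  set B := ball x₀ r
  set n := finrank ℝ E
  set κ := (μ (ball (0 : E) 1) ^ (1 / (n : ℝ)))⁻¹
  set L := (∫⁻ x in B, ENNReal.ofReal (max (‖fderivWithin ℝ u B x‖ - η / ρ) 0 ^ n) ∂μ)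
    ^ (1 / (n : ℝ))
  calc _ ≤ ediam B * (2 ^ n * μ B * ∫⁻ x in B, ‖fderivWithin ℝ u B x‖ₑ ∂μ) :=
        setLIntegral_prod_enorm_sub_le_of_convex μ (convex_ball x₀ r) measurableSet_ball h_diff hu
    _ ≤ 2 * ENNReal.ofReal r * (2 ^ n * μ B * ∫⁻ x in B, ‖fderivWithin ℝ u B x‖ₑ ∂μ) := by
        gcongr
    _ = 2 ^ (n + 1) * μ B * (ENNReal.ofReal r * ∫⁻ x in B, ‖fderivWithin ℝ u B x‖ₑ ∂μ) := by ring
    _ ≤ 2 ^ (n + 1) * μ B * (μ B * (κ * L + 1 * ENNReal.ofReal η)) := by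
        rw [one_mul]
        gcongr
    _ ≤ 2 ^ (n + 1) * μ B * (μ B * ((κ + 1) * L + (κ + 1) * ENNReal.ofReal η)) := by
        gcongr <;> simp
    _ = _ := by ring

theorem truncated_poincare_mean_oscillation_general :
    ∃ C : ℝ, 0 < C ∧ ∀ {F : Type*} [NormedAddCommGroup F] [NormedSpace ℝ F]
      (x₀ : E) (r ρ : ℝ), 0 < r → r ≤ ρ → ∀ (η : ℝ), 0 ≤ η →
      ∀ u : E → F, ContDiffOn ℝ 1 u (ball x₀ r) →
        (μ (ball x₀ r) ^ 2)⁻¹ *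
            (∫⁻ q in ball x₀ r ×ˢ ball x₀ r, ENNReal.ofReal ‖u q.1 - u q.2‖ ∂(μ.prod μ))
          ≤ ENNReal.ofReal C *
            ((∫⁻ x in ball x₀ r,
                ENNReal.ofReal
                  ((max (‖fderivWithin ℝ u (ball x₀ r) x‖ - η / ρ) 0) ^ finrank ℝ E) ∂μ)
                ^ (1 / (finrank ℝ E : ℝ))
              + ENNReal.ofReal η) := by
  set C : ℝ≥0∞ := 2 ^ (finrank ℝ E + 1) * ((μ (ball (0 : E) 1) ^ (1 / (finrank ℝ E : ℝ)))⁻¹ + 1)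
  have h_unit_ball : μ (ball (0 : E) 1) ^ (1 / (finrank ℝ E : ℝ)) ≠ 0 :=
    (ENNReal.rpow_pos (measure_ball_pos μ _ one_pos) measure_ball_lt_top.ne).ne'
  have hC_zero : C ≠ 0 := by simp [C]
  have hC_top : C ≠ ∞ := by finiteness
  refine ⟨C.toReal, ENNReal.toReal_pos hC_zero hC_top, ?_⟩
  intro F _ _ x₀ r ρ hr hrρ η hη u hu
  rw [ENNReal.ofReal_toReal hC_top, mul_comm, ← div_eq_mul_inv]
  simp_rw [ofReal_norm]
  exact ENNReal.div_le_of_le_mul' (setLIntegral_ball_prod_enorm_sub_le μ hr hrρ hη hu)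

end Poincare

/-- Truncated Poincaré-type mean-oscillation estimate (from the proof of
Proposition 2.5). -/
theorem truncated_poincare_mean_oscillation (p : ℕ) (hp : 1 ≤ p) :
    ∃ C : ℝ, 0 < C ∧ ∀ (ν : ℕ), 1 ≤ ν →
      ∀ (x₀ : EuclideanSpace ℝ (Fin p)) (r ρ : ℝ), 0 < r → r ≤ ρ →
      ∀ (η : ℝ), 0 < η →
      ∀ (u : EuclideanSpace ℝ (Fin p) → EuclideanSpace ℝ (Fin ν)),
        ContDiffOn ℝ 1 u (Metric.ball x₀ r) →
        IntegrableOn (fun x => fderivWithin ℝ u (Metric.ball x₀ r) x)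
          (Metric.ball x₀ r) →
        (volume (Metric.ball x₀ r) ^ 2)⁻¹ *
            (∫⁻ z in (Metric.ball x₀ r) ×ˢ (Metric.ball x₀ r),
              ENNReal.ofReal ‖u z.1 - u z.2‖)
          ≤ ENNReal.ofReal C *
            ((∫⁻ x in Metric.ball x₀ r,
                ENNReal.ofReal
                  ((max (‖fderivWithin ℝ u (Metric.ball x₀ r) x‖ - η / ρ) 0) ^ p))
                ^ (1 / (p : ℝ))
              + ENNReal.ofReal η) := by
  have : NeZero p := ⟨by omega⟩
  obtain ⟨C, hC, h⟩ :=
    truncated_poincare_mean_oscillation_general (volume : Measure (EuclideanSpace ℝ (Fin p)))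
  simp only [finrank_euclideanSpace_fin] at h
  exact ⟨C, hC, fun ν _ x₀ r ρ hr hrρ η hη u hu _ => h x₀ r ρ hr hrρ η hη.le u hu⟩
end
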